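/- arXiv:2508.15538 — 2 statements merged into one kernel-verified Lean document; each statement's English description precedes it below -/
import Mathlib

section
/- Let P be a finite graded simplicial poset of rank n with positive h-vector (h_0, …, h_n), i.e. h_i ≥ 0 for all i, and let P̂ be P with a top element 1̂ adjoined. Then the Chow polynomial H_{P̂}(x) = Σ_{S ⊆ {2,…,n}, S isolated} β_{P̂}(S) · x^{|S|} · (1+x)^{n−2|S|} is real-rooted (all of its complex roots are real). -/
open Polynomial

noncomputable section

/-- A real polynomial is *real-rooted* if all of its complex roots are real.
(The zero polynomial is real-rooted by convention.) -/
def RealRooted (f : Polynomial ℝ) : Prop :=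
  ∀ z ∈ (f.map (algebraMap ℝ ℂ)).roots, z.im = 0

/-- All coefficients of the polynomial are nonnegative. -/
def NonnegCoeffs (f : Polynomial ℝ) : Prop := ∀ i, 0 ≤ f.coeff i

/-- The list of real roots of `f`, with multiplicity, in weakly decreasing order. -/
def descRoots (f : Polynomial ℝ) : List ℝ := (f.roots.sort (· ≤ ·)).reverse

/-- The interlacing condition on the weakly decreasing root sequences
`α` of `f` and `β` of `g` : `β₁ ≥ α₁ ≥ β₂ ≥ α₂ ≥ …`, together with the
degree condition `deg g ∈ {deg f, deg f + 1}`. -/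
def InterlacesAux (f g : Polynomial ℝ) : Prop :=
  (g.natDegree = f.natDegree ∨ g.natDegree = f.natDegree + 1) ∧
  (∀ (i : ℕ) (hf : i < (descRoots f).length) (hg : i < (descRoots g).length),
      (descRoots f).get ⟨i, hf⟩ ≤ (descRoots g).get ⟨i, hg⟩) ∧
  (∀ (i : ℕ) (hf : i < (descRoots f).length) (hg : i + 1 < (descRoots g).length),
      (descRoots g).get ⟨i + 1, hg⟩ ≤ (descRoots f).get ⟨i, hf⟩)

/-- `f ⪯ g` : `f` interlaces `g`.  Both polynomials are required to be real-rooted;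
by convention `0 ⪯ 0`, `0 ⪯ f`, `f ⪯ 0`, and any two polynomials of degree at most 1
interlace. -/
def Interlaces (f g : Polynomial ℝ) : Prop :=
  RealRooted f ∧ RealRooted g ∧
  (f = 0 ∨ g = 0 ∨ (f.natDegree ≤ 1 ∧ g.natDegree ≤ 1) ∨ InterlacesAux f g)

/-- A finite family of real-rooted polynomials is an interlacing sequence if
`F i ⪯ F j` for all `i < j`. -/
def InterlacingSeq {n : ℕ} (F : Fin n → Polynomial ℝ) : Prop :=
  ∀ i j : Fin n, i < j → Interlaces (F i) (F j)

/-- A polynomial of degree `d` is palindromic if `coeff i = coeff (d - i)` for all `i ≤ d`. -/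
def Palindromic (f : Polynomial ℝ) : Prop :=
  ∀ i ≤ f.natDegree, f.coeff i = f.coeff (f.natDegree - i)

/-- A set `S ⊆ ℕ` is isolated if `i ∈ S` implies `i + 1 ∉ S`. -/
def IsolatedSet (S : Finset ℕ) : Prop := ∀ i ∈ S, i + 1 ∉ S

instance : DecidablePred IsolatedSet := fun S =>
  decidable_of_iff (∀ i ∈ S, i + 1 ∉ S) Iff.rfl

/-- The descent set of a permutation `w` of `{1, …, n+1}` (encoded as a permutation of
`Fin (n+1)`), as a subset of `{1, …, n}` : `Des(w) = {i ∈ {1,…,n} : w(i) > w(i+1)}`. -/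
def desSet {n : ℕ} (w : Equiv.Perm (Fin (n + 1))) : Finset ℕ :=
  (Finset.univ.filter (fun i : Fin n => w i.succ < w i.castSucc)).image
    (fun i => i.val + 1)

/-- The polynomial `p_{n,k}^{S ⊆ T}(x) = Σ x^{des(w)}`, the sum over all permutations `w`
of `{1, …, n+1}` with `w(1) = k + 1`, `Des(w)` isolated and `S ⊆ Des(w) ⊆ T`. -/
def pPoly (n k : ℕ) (S T : Finset ℕ) : Polynomial ℝ :=
  ∑ w ∈ Finset.univ.filter (fun w : Equiv.Perm (Fin (n + 1)) =>
      (w 0 : ℕ) = k ∧ IsolatedSet (desSet w) ∧ S ⊆ desSet w ∧ desSet w ⊆ T),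
    Polynomial.X ^ (desSet w).card

/-- The shifted set `S - 1 = {i - 1 : i ∈ S} ∩ {1, …, n-1}`. -/
def shiftDown (n : ℕ) (S : Finset ℕ) : Finset ℕ :=
  (S.image (fun i => i - 1)) ∩ Finset.Icc 1 (n - 1)

section Poset

variable (P : Type*) [Fintype P] [PartialOrder P] [OrderBot P]

/-- A finite poset `P` with a minimum is simplicial of rank `n` if for every maximal
element `m` the interval `[⊥, m]` is order-isomorphic to the boolean lattice of
subsets of an `n`-element set. -/
def SimplicialOfRank (n : ℕ) : Prop :=
  ∀ m : P, IsMax m → Nonempty ((Set.Icc (⊥ : P) m) ≃o Finset (Fin n))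

variable {P}

/-- `rk` is a rank function: `rk ⊥ = 0` and ranks increase by one along covers. -/
def IsRankFunction (rk : P → ℕ) : Prop :=
  rk ⊥ = 0 ∧ ∀ a b : P, a ⋖ b → rk b = rk a + 1

/-- `f_{i-1}` : the number of elements of `P` of rank `i`. -/
def fvec (rk : P → ℕ) (i : ℕ) : ℕ := (Finset.univ.filter (fun x => rk x = i)).card

/-- The generating polynomial `Σ_{i=0}^n h_i x^i = Σ_{i=0}^n f_{i-1} x^i (1-x)^{n-i}`
of the h-vector of `P`. -/
def hPoly (rk : P → ℕ) (n : ℕ) : Polynomial ℤ :=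
  ∑ i ∈ Finset.range (n + 1),
    Polynomial.C (fvec rk i : ℤ) * Polynomial.X ^ i * (1 - Polynomial.X) ^ (n - i)

/-- The h-vector entry `h_k` of `P`. -/
def hvec (rk : P → ℕ) (n k : ℕ) : ℤ := (hPoly rk n).coeff k

/-- The flag f-vector `α_{P̂}(T)` : the number of chains in `P̂ ∖ {0̂, 1̂} = P ∖ {⊥}`
whose set of ranks is exactly `T`. -/
def flagF (rk : P → ℕ) (T : Finset ℕ) : ℕ :=
  Nat.card {c : Finset P // IsChain (· ≤ ·) (c : Set P) ∧ (⊥ : P) ∉ c ∧ c.image rk = T}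

/-- The flag h-vector `β_{P̂}(S) = Σ_{T ⊆ S} (-1)^{|S ∖ T|} α_{P̂}(T)`. -/
def flagH (rk : P → ℕ) (S : Finset ℕ) : ℤ :=
  ∑ T ∈ S.powerset, (-1) ^ ((S \ T).card) * (flagF rk T : ℤ)

/-- The flag h-vector of the dual poset `P̂*` : `β_{P̂*}(S) = β_{P̂}({n+1-s : s ∈ S})`. -/
def flagHDual (rk : P → ℕ) (n : ℕ) (S : Finset ℕ) : ℤ :=
  flagH rk (S.image (fun s => n + 1 - s))

/-- The Chow polynomial
`H_{P̂}(x) = Σ_{S ⊆ {2,…,n} isolated} β_{P̂}(S) x^{|S|} (1+x)^{n-2|S|}`. -/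
def chowPoly (rk : P → ℕ) (n : ℕ) : Polynomial ℝ :=
  ∑ S ∈ (Finset.Icc 2 n).powerset.filter IsolatedSet,
    (flagH rk S : ℝ) • (Polynomial.X ^ S.card * (1 + Polynomial.X) ^ (n - 2 * S.card))

/-- The augmented Chow polynomial
`H^aug_{P̂}(x) = Σ_{S ⊆ {1,…,n} isolated} β_{P̂}(S) x^{|S|} (1+x)^{n+1-2|S|}`. -/
def chowAugPoly (rk : P → ℕ) (n : ℕ) : Polynomial ℝ :=
  ∑ S ∈ (Finset.Icc 1 n).powerset.filter IsolatedSet,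
    (flagH rk S : ℝ) • (Polynomial.X ^ S.card * (1 + Polynomial.X) ^ (n + 1 - 2 * S.card))

/-- The Chow polynomial of the dual poset `P̂*`. -/
def chowDualPoly (rk : P → ℕ) (n : ℕ) : Polynomial ℝ :=
  ∑ S ∈ (Finset.Icc 2 n).powerset.filter IsolatedSet,
    (flagHDual rk n S : ℝ) • (Polynomial.X ^ S.card * (1 + Polynomial.X) ^ (n - 2 * S.card))

/-- The augmented Chow polynomial of the dual poset `P̂*`. -/
def chowAugDualPoly (rk : P → ℕ) (n : ℕ) : Polynomial ℝ :=
  ∑ S ∈ (Finset.Icc 1 n).powerset.filter IsolatedSet,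
    (flagHDual rk n S : ℝ) • (Polynomial.X ^ S.card * (1 + Polynomial.X) ^ (n + 1 - 2 * S.card))

end Poset

end

noncomputable section

section Sector

open Finset ComplexConjugate

/-- Angular comparison of complex numbers relative to `w`. -/
def sle (w a b : ℂ) : Prop := 0 ≤ (conj w * b * conj a).re

lemma sle_zero_left (w b : ℂ) : sle w 0 b := by simp [sle]
lemma sle_zero_right (w a : ℂ) : sle w a 0 := by simp [sle]

lemma sle_add_left {w a b c : ℂ} (h1 : sle w a c) (h2 : sle w b c) : sle w (a + b) c := by
  unfold sle at *
  rw [map_add, mul_add, Complex.add_re]; exact add_nonneg h1 h2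

lemma sle_add_right {w a b c : ℂ} (h1 : sle w a b) (h2 : sle w a c) : sle w a (b + c) := by
  unfold sle at *
  rw [mul_add, add_mul, Complex.add_re]; exact add_nonneg h1 h2

lemma sle_sum_left {ι : Type*} {w c : ℂ} (s : Finset ι) (f : ι → ℂ)
    (h : ∀ i ∈ s, sle w (f i) c) : sle w (∑ i ∈ s, f i) c :=
  Finset.sum_induction f (fun a => sle w a c) (fun _ _ => sle_add_left) (sle_zero_left _ _) h

lemma sle_sum_right {ι : Type*} {w c : ℂ} (s : Finset ι) (f : ι → ℂ)
    (h : ∀ i ∈ s, sle w c (f i)) : sle w c (∑ i ∈ s, f i) :=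
  Finset.sum_induction f (fun a => sle w c a) (fun _ _ => sle_add_right) (sle_zero_right _ _) h

lemma sle_sum_sum {ι κ : Type*} {w : ℂ} (s : Finset ι) (t : Finset κ) (f : ι → ℂ) (g : κ → ℂ)
    (h : ∀ i ∈ s, ∀ j ∈ t, sle w (f i) (g j)) : sle w (∑ i ∈ s, f i) (∑ j ∈ t, g j) :=
  sle_sum_left _ _ fun i hi => sle_sum_right _ _ fun j hj => h i hi j hj

lemma sle_refl {w : ℂ} (hw : 0 < w.re) (a : ℂ) : sle w a a := by
  unfold sle
  have : (conj w * a * conj a).re = w.re * (a.re ^ 2 + a.im ^ 2) := by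
    simp; ring
  rw [this]; positivity

lemma sle_rot {w a b : ℂ} (h : sle w a b) : sle w b (w ^ 2 * a) := by
  unfold sle at *
  have : (conj w * (w ^ 2 * a) * conj b).re
      = (w.re ^ 2 + w.im ^ 2) * (conj w * b * conj a).re := by
    simp [pow_two]; ring
  rw [this]; positivity

lemma sle_rot2 {w a b : ℂ} (h : sle w a b) : sle w (w ^ 2 * a) (w ^ 2 * b) :=
  sle_rot (sle_rot h)

lemma sle_smul {w a b : ℂ} {c d : ℝ} (hc : 0 ≤ c) (hd : 0 ≤ d) (h : sle w a b) :
    sle w (c * a) (d * b) := by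
  unfold sle at *
  have : (conj w * (d * b) * conj ((c : ℂ) * a)).re
      = (c * d) * (conj w * b * conj a).re := by
    simp; ring
  rw [this]; positivity

lemma sle_eq_zero {w a b : ℂ} (hw : 0 < w.re) (h : sle w a b) (hab : a + b = 0) : a = 0 := by
  have hb : b = -a := by linear_combination hab
  subst hb
  unfold sle at h
  have : (conj w * (-a) * conj a).re = -(w.re * (a.re ^ 2 + a.im ^ 2)) := by
    simp; ring
  rw [this] at h
  have h2 : a.re ^ 2 + a.im ^ 2 ≤ 0 := by
    by_contra hc
    push Not at hc
    have := mul_pos hw hc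
    linarith
  apply Complex.ext
  · simp; nlinarith [sq_nonneg a.re, sq_nonneg a.im]
  · simp; nlinarith [sq_nonneg a.re, sq_nonneg a.im]

/-- The pair of sequences (last step ascent, last step descent). -/
def AD (z : ℂ) : ℕ → (ℕ → ℂ) × (ℕ → ℂ)
  | 0 => (fun _ => 1, fun _ => 0)
  | n + 1 => (fun j => ∑ i ∈ range j, ((AD z n).1 i + (AD z n).2 i),
      fun j => if n = 0 then 0 else z * ∑ i ∈ Ico j (n + 1), (AD z n).1 i)

def seqA (z : ℂ) (n j : ℕ) : ℂ := (AD z n).1 j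
def seqD (z : ℂ) (n j : ℕ) : ℂ := (AD z n).2 j
def seqF (z : ℂ) (n j : ℕ) : ℂ := seqA z n j + seqD z n j

lemma seqA_zero (z : ℂ) (j : ℕ) : seqA z 0 j = 1 := rfl
lemma seqD_zero (z : ℂ) (j : ℕ) : seqD z 0 j = 0 := rfl
lemma seqA_succ (z : ℂ) (n j : ℕ) : seqA z (n + 1) j = ∑ i ∈ range j, seqF z n i := rfl
lemma seqD_one (z : ℂ) (j : ℕ) : seqD z 1 j = 0 := by simp [seqD, AD]
lemma seqD_succ (z : ℂ) (n j : ℕ) (hn : n ≠ 0) :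
    seqD z (n + 1) j = z * ∑ i ∈ Ico j (n + 1), seqA z n i := by simp [seqD, AD, hn, seqA]

structure SecInv (w : ℂ) (n : ℕ) : Prop where
  AA : ∀ i j, j ≤ i → i ≤ n → sle w (seqA (w ^ 2) n i) (seqA (w ^ 2) n j)
  DD : ∀ i j, i ≤ n → j ≤ n → sle w (seqA (w ^ 2) n i) (seqD (w ^ 2) n j)
  FF : ∀ i j, j ≤ i → i ≤ n → sle w (seqF (w ^ 2) n i) (seqF (w ^ 2) n j)

lemma secInv_zero {w : ℂ} (hw : 0 < w.re) : SecInv w 0 := by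
  refine ⟨fun i j _ _ => ?_, fun i j _ _ => ?_, fun i j _ _ => ?_⟩
  · exact sle_refl hw 1
  · exact sle_zero_right _ _
  · simpa [seqF, seqA_zero, seqD_zero] using sle_refl hw 1

/-- sums over initial segments -/
lemma sle_prefix {w : ℂ} (hw : 0 < w.re) (f : ℕ → ℂ) (n i j : ℕ) (hji : j ≤ i) (hi : i ≤ n + 1)
    (h : ∀ i j, j ≤ i → i ≤ n → sle w (f i) (f j)) :
    sle w (∑ k ∈ range i, f k) (∑ k ∈ range j, f k) := by
  rw [← Finset.sum_range_add_sum_Ico f hji]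
  refine sle_add_left (sle_refl hw _) (sle_sum_sum _ _ _ _ fun a ha b hb => ?_)
  simp only [mem_Ico, mem_range] at ha hb
  exact h _ _ (by omega) (by omega)

/-- tail versus prefix -/
lemma sle_tail_prefix {w : ℂ} (hw : 0 < w.re) (f : ℕ → ℂ) (n k m : ℕ) (hm : m ≤ n + 1)
    (h : ∀ i j, j ≤ i → i ≤ n → sle w (f i) (f j)) :
    sle w (∑ i ∈ Ico k (n + 1), f i) (∑ i ∈ range m, f i) := by
  rcases le_or_gt m k with hk | hk
  · refine sle_sum_sum _ _ _ _ fun a ha b hb => ?_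
    simp only [mem_Ico, mem_range] at ha hb
    exact h _ _ (by omega) (by omega)
  · rw [← Finset.sum_range_add_sum_Ico f hk.le, ← Finset.sum_Ico_consecutive f hk.le hm]
    refine sle_add_left (sle_add_right ?_ (sle_refl hw _)) (sle_add_right ?_ ?_)
    all_goals
      refine sle_sum_sum _ _ _ _ fun a ha b hb => ?_
      simp only [mem_Ico, mem_range] at ha hb
      exact h _ _ (by omega) (by omega)

lemma secInv_succ {w : ℂ} (hw : 0 < w.re) (n : ℕ) (H : SecInv w n) : SecInv w (n + 1) := by
  have hAA : ∀ i j, j ≤ i → i ≤ n + 1 →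
      sle w (seqA (w ^ 2) (n + 1) i) (seqA (w ^ 2) (n + 1) j) := by
    intro i j hji hi
    rw [seqA_succ, seqA_succ]
    exact sle_prefix hw _ n i j hji hi H.FF
  have hAF : ∀ i j, j ≤ i → i ≤ n → sle w (seqA (w ^ 2) n i) (seqF (w ^ 2) n j) :=
    fun i j hji hi => sle_add_right (H.AA i j hji hi) (H.DD i j hi (by omega))
  rcases Nat.eq_zero_or_pos n with rfl | hn
  · refine ⟨hAA, fun i j _ _ => ?_, fun i j hji hi => ?_⟩
    · rw [zero_add, seqD_one]; exact sle_zero_right _ _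
    · have := hAA i j hji hi
      simpa [seqF, seqD_one] using this
  have hRP : ∀ k m, m ≤ n + 1 → sle w (∑ i ∈ Ico k (n + 1), seqA (w ^ 2) n i)
      (∑ i ∈ range m, seqF (w ^ 2) n i) := by
    intro k m hm
    simp only [seqF, sum_add_distrib]
    refine sle_add_right (sle_tail_prefix hw _ n k m hm H.AA) (sle_sum_sum _ _ _ _ fun a ha b hb => ?_)
    simp only [mem_Ico, mem_range] at ha hb
    exact H.DD _ _ (by omega) (by omega)
  refine ⟨hAA, fun i j hi hj => ?_, fun m k hkm hm => ?_⟩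
  · rw [seqA_succ, seqD_succ _ _ _ hn.ne']
    exact sle_rot (hRP _ _ hi)
  · have hF : ∀ m, seqF (w ^ 2) (n + 1) m = ∑ i ∈ range m, seqF (w ^ 2) n i
        + w ^ 2 * ∑ i ∈ Ico m (n + 1), seqA (w ^ 2) n i := fun m => by
      rw [← seqA_succ, ← seqD_succ _ _ _ hn.ne', seqF]
    rw [hF, hF, ← Finset.sum_range_add_sum_Ico (seqF (w ^ 2) n) hkm,
      ← Finset.sum_Ico_consecutive (seqA (w ^ 2) n) hkm hm]
    set P := ∑ i ∈ range k, seqF (w ^ 2) n i with hP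
    set Q := ∑ i ∈ Ico k m, seqF (w ^ 2) n i with hQ
    set R := ∑ i ∈ Ico m (n + 1), seqA (w ^ 2) n i with hR
    set S := ∑ i ∈ Ico k m, seqA (w ^ 2) n i with hS
    have hSP : sle w S P := by
      refine sle_sum_sum _ _ _ _ fun a ha b hb => ?_
      simp only [mem_Ico, mem_range] at ha hb
      exact hAF _ _ (by omega) (by omega)
    have hRS : sle w R S := by
      refine sle_sum_sum _ _ _ _ fun a ha b hb => ?_
      simp only [mem_Ico, mem_range] at ha hb
      exact H.AA _ _ (by omega) (by omega)
    have hQP : sle w Q P := by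
      refine sle_sum_sum _ _ _ _ fun a ha b hb => ?_
      simp only [mem_Ico, mem_range] at ha hb
      exact H.FF _ _ (by omega) (by omega)
    have hRQ : sle w R Q := by
      refine sle_sum_sum _ _ _ _ fun a ha b hb => ?_
      simp only [mem_Ico, mem_range] at ha hb
      exact hAF _ _ (by omega) (by omega)
    have hSQ : sle w S Q := by
      rw [hQ]
      simp only [seqF, sum_add_distrib]
      refine sle_add_right (sle_refl hw _) (sle_sum_sum _ _ _ _ fun a ha b hb => ?_)
      simp only [mem_Ico, mem_range] at ha hb
      exact H.DD _ _ (by omega) (by omega)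
    have e1 : P + Q + w ^ 2 * R = (P + w ^ 2 * R) + Q := by ring
    have e2 : P + w ^ 2 * (S + R) = (P + w ^ 2 * R) + w ^ 2 * S := by ring
    rw [e1, e2]
    refine sle_add_left (sle_add_right (sle_refl hw _) ?_) (sle_add_right ?_ (sle_rot hSQ))
    · exact sle_add_left (sle_rot hSP) (sle_rot2 hRS)
    · exact sle_add_right hQP (sle_rot hRQ)

lemma secInv_all {w : ℂ} (hw : 0 < w.re) (n : ℕ) : SecInv w n := by
  induction n with
  | zero => exact secInv_zero hw
  | succ n ih => exact secInv_succ hw n ih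

/-- A nonnegative combination with positive top weight and nonzero top vanishes nowhere. -/
lemma top_of_sum_zero {w : ℂ} (hw : 0 < w.re) (n : ℕ) (f : ℕ → ℂ) (c : ℕ → ℝ)
    (hc : ∀ i, 0 ≤ c i) (h : ∀ i j, j ≤ i → i ≤ n → sle w (f i) (f j))
    (h0 : ∑ i ∈ range (n + 1), (c i : ℂ) * f i = 0) : (c n : ℂ) * f n = 0 := by
  rw [sum_range_succ, add_comm] at h0
  refine sle_eq_zero hw (sle_sum_right _ _ fun i hi => ?_) h0
  simp only [mem_range] at hi
  exact sle_smul (hc _) (hc _) (h _ _ hi.le le_rfl)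

lemma seqA_top_ne_zero {w : ℂ} (hw : 0 < w.re) (n : ℕ) : seqA (w ^ 2) n n ≠ 0 := by
  induction n with
  | zero => simp [seqA_zero]
  | succ n ih =>
    intro h
    have H := secInv_all hw n
    rw [seqA_succ] at h
    have := top_of_sum_zero hw n (seqF (w ^ 2) n) (fun _ => 1) (fun _ => zero_le_one) H.FF
      (by simpa using h)
    exact ih (sle_eq_zero hw (H.DD n n le_rfl le_rfl) (by simpa [seqF] using this))

lemma seqF_top_ne_zero {w : ℂ} (hw : 0 < w.re) (n : ℕ) : seqF (w ^ 2) n n ≠ 0 := fun h =>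
  seqA_top_ne_zero hw n (sle_eq_zero hw ((secInv_all hw n).DD n n le_rfl le_rfl) h)

lemma gamma_ne_zero {w : ℂ} (hw : 0 < w.re) (n : ℕ) (c : ℕ → ℝ)
    (hc : ∀ i, 0 ≤ c i) (hn : 0 < c n) :
    ∑ i ∈ range (n + 1), (c i : ℂ) * seqF (w ^ 2) n i ≠ 0 := by
  intro h
  have := top_of_sum_zero hw n _ c hc (secInv_all hw n).FF h
  rcases mul_eq_zero.1 this with h | h
  · exact hn.ne' (by exact_mod_cast h)
  · exact seqF_top_ne_zero hw n h

end Sector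

section Gen

open Finset

/-- `aa n T j`: permutations of `n+1` letters, last letter `j`, descent set inside `T`. -/
def aa : ℕ → Finset ℕ → ℕ → ℤ
  | 0, _, _ => 1
  | n + 1, T, j => if n + 1 ∈ T then ∑ i ∈ range (n + 1), aa n T i else ∑ i ∈ range j, aa n T i

/-- `bb n S j`: permutations of `n+1` letters, last letter `j`, descent set equal to `S`. -/
def bb : ℕ → Finset ℕ → ℕ → ℤ
  | 0, _, _ => 1
  | n + 1, S, j => if n + 1 ∈ S then ∑ i ∈ Ico j (n + 1), bb n S i else ∑ i ∈ range j, bb n S i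

lemma aa_insert (n m : ℕ) (h : n < m) (T : Finset ℕ) (j : ℕ) :
    aa n (insert m T) j = aa n T j := by
  induction n generalizing j with
  | zero => rfl
  | succ n ih =>
    have hne : n + 1 ≠ m := by omega
    simp only [aa, mem_insert, hne, false_or, ih (by omega)]

lemma bb_insert (n m : ℕ) (h : n < m) (T : Finset ℕ) (j : ℕ) :
    bb n (insert m T) j = bb n T j := by
  induction n generalizing j with
  | zero => rfl
  | succ n ih =>
    have hne : n + 1 ≠ m := by omega
    simp only [bb, mem_insert, hne, false_or, ih (by omega)]

lemma bb_eq (n : ℕ) : ∀ (S : Finset ℕ) (j : ℕ), S ⊆ Icc 1 n → j ≤ n →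
    ∑ T ∈ S.powerset, (-1 : ℤ) ^ (S \ T).card * aa n T j = bb n S j := by
  induction n with
  | zero =>
    intro S j hS hj
    have : S = ∅ := by simpa using hS
    subst this
    simp [aa, bb]
  | succ n ih =>
    intro S j hS hj
    by_cases hn : n + 1 ∈ S
    · obtain ⟨S', hS', rfl⟩ : ∃ S', n + 1 ∉ S' ∧ S = insert (n + 1) S' :=
        ⟨S.erase (n + 1), by simp, by simp [insert_erase hn]⟩
      have hsub : S' ⊆ Icc 1 n := by
        intro x hx
        have := hS (mem_insert_of_mem hx)
        have hne : x ≠ n + 1 := fun h => hS' (h ▸ hx)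
        simp only [mem_Icc] at this ⊢
        omega
      rw [sum_powerset_insert hS']
      have e1 : ∀ T ∈ S'.powerset, (-1 : ℤ) ^ (insert (n + 1) S' \ T).card * aa (n + 1) T j
          = - ∑ i ∈ range j, (-1 : ℤ) ^ (S' \ T).card * aa n T i := by
        intro T hT
        have hT' : n + 1 ∉ T := fun h => hS' (mem_powerset.1 hT h)
        rw [insert_sdiff_of_notMem _ hT', card_insert_of_notMem (by simp [hS'])]
        simp only [aa, hT', if_false, ← mul_sum]
        ring
      have e2 : ∀ T ∈ S'.powerset,
          (-1 : ℤ) ^ (insert (n + 1) S' \ insert (n + 1) T).card * aa (n + 1) (insert (n + 1) T) j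
          = ∑ i ∈ range (n + 1), (-1 : ℤ) ^ (S' \ T).card * aa n T i := by
        intro T hT
        have : insert (n + 1) S' \ insert (n + 1) T = S' \ T := by
          ext x
          simp only [mem_sdiff, mem_insert]
          by_cases hx : x = n + 1
          · subst hx; simp [hS']
          · simp [hx]
        rw [this]
        simp only [aa, mem_insert_self, if_true, aa_insert n (n + 1) (Nat.lt_succ_self n), mul_sum]
      rw [sum_congr rfl e1, sum_congr rfl e2, sum_neg_distrib, sum_comm,
        sum_comm (s := S'.powerset)]
      have e3 : ∀ m, m ≤ n + 1 → ∑ y ∈ range m, ∑ T ∈ S'.powerset, (-1 : ℤ) ^ (S' \ T).card * aa n T y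
          = ∑ y ∈ range m, bb n S' y := fun m hm =>
        sum_congr rfl fun y hy => ih S' y hsub (by simp only [mem_range] at hy; omega)
      rw [e3 _ hj, e3 _ le_rfl, ← sum_range_add_sum_Ico _ hj]
      simp only [bb, mem_insert_self, if_true, bb_insert n (n + 1) (Nat.lt_succ_self n)]
      ring
    · have hsub : S ⊆ Icc 1 n := by
        intro x hx
        have := hS hx
        have hne : x ≠ n + 1 := fun h => hn (h ▸ hx)
        simp only [mem_Icc] at this ⊢
        omega
      have e1 : ∀ T ∈ S.powerset, (-1 : ℤ) ^ (S \ T).card * aa (n + 1) T j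
          = ∑ i ∈ range j, (-1 : ℤ) ^ (S \ T).card * aa n T i := by
        intro T hT
        have hT' : n + 1 ∉ T := fun h => hn (mem_powerset.1 hT h)
        simp only [aa, hT', if_false, ← mul_sum]
      rw [sum_congr rfl e1, sum_comm]
      simp only [bb, hn, if_false]
      exact sum_congr rfl fun y hy => ih S y hsub (by simp only [mem_range] at hy; omega)

lemma gen_A_succ (z : ℂ) (n : ℕ)
    (h : ∀ j, ∑ S ∈ (Icc 2 n).powerset.filter IsolatedSet, (bb n S j : ℂ) * z ^ S.card
      = seqF z n j) (j : ℕ) :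
    ∑ S ∈ (Icc 2 n).powerset.filter IsolatedSet, (bb (n + 1) S j : ℂ) * z ^ S.card
      = seqA z (n + 1) j := by
  rw [seqA_succ]
  simp only [← h]
  rw [sum_comm]
  refine sum_congr rfl fun S hS => ?_
  have hS' : n + 1 ∉ S := by
    intro hn
    have := mem_powerset.1 (mem_filter.1 hS).1 hn
    simp at this
  simp only [bb, hS', if_false]
  push_cast
  rw [sum_mul]

lemma gen_all (z : ℂ) (n : ℕ) :
    (∀ j, ∑ S ∈ (Icc 2 n).powerset.filter IsolatedSet, (bb n S j : ℂ) * z ^ S.card = seqF z n j) ∧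
    (∀ j, ∑ S ∈ (Icc 2 (n - 1)).powerset.filter IsolatedSet, (bb n S j : ℂ) * z ^ S.card
      = seqA z n j) := by
  have hiso : IsolatedSet ∅ := by simp [IsolatedSet]
  induction n with
  | zero =>
    constructor <;> intro j <;>
      simp [bb, seqF, seqA_zero, seqD_zero, filter_singleton, hiso]
  | succ n ih =>
    have hA := gen_A_succ z n ih.1
    refine ⟨fun j => ?_, by simpa using hA⟩
    rcases Nat.eq_zero_or_pos n with rfl | hn
    · have := hA j
      simpa [seqF, seqD_one] using this
    have hIcc : Icc 2 (n + 1) = insert (n + 1) (Icc 2 n) := by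
      ext x; simp only [mem_Icc, mem_insert]; omega
    rw [seqF, ← hA j, seqD_succ _ _ _ hn.ne', hIcc, sum_filter, sum_powerset_insert (by simp),
      ← sum_filter]
    congr 1
    simp only [← ih.2, mul_sum]
    rw [sum_comm]
    have hset : (Icc 2 (n - 1)).powerset.filter IsolatedSet
        = (Icc 2 n).powerset.filter (fun S => IsolatedSet (insert (n + 1) S)) := by
      ext S
      simp only [mem_filter, mem_powerset]
      constructor
      · rintro ⟨h1, h2⟩
        refine ⟨fun x hx => ?_, fun i hi hi' => ?_⟩
        · have := h1 hx
          simp only [mem_Icc] at this ⊢; omega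
        · rw [mem_insert] at hi hi'
          rcases hi with rfl | hi
          · rcases hi' with h | h
            · omega
            · have := h1 h
              simp only [mem_Icc] at this; omega
          · rcases hi' with h | h
            · have := h1 hi
              simp only [mem_Icc] at this; omega
            · exact h2 i hi h
      · rintro ⟨h1, h2⟩
        refine ⟨fun x hx => ?_, fun i hi hi' => ?_⟩
        · have := h1 hx
          have hne : x ≠ n := by
            rintro rfl
            exact h2 x (mem_insert_of_mem hx) (mem_insert_self _ _)
          simp only [mem_Icc] at this ⊢; omega
        · exact h2 i (mem_insert_of_mem hi) (mem_insert_of_mem hi')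
    rw [hset, ← sum_filter]
    refine sum_congr rfl fun S hS => ?_
    have hS' : n + 1 ∉ S := by
      intro hn
      have := mem_powerset.1 (mem_filter.1 hS).1 hn
      simp at this
    rw [card_insert_of_notMem hS']
    simp only [bb, mem_insert_self, if_true, bb_insert n (n + 1) (Nat.lt_succ_self n)]
    push_cast
    rw [sum_mul]
    refine sum_congr rfl fun i _ => ?_
    ring

lemma sum_range_choose_col (j k : ℕ) : ∑ i ∈ range j, Nat.choose i k = Nat.choose j (k + 1) := by
  induction j with
  | zero => simp
  | succ j ih => rw [sum_range_succ, ih, Nat.choose_succ_succ' j k, add_comm]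

lemma aa_empty (n j : ℕ) : aa n ∅ j = (Nat.choose j n : ℤ) := by
  induction n generalizing j with
  | zero => simp [aa]
  | succ n ih => simp only [aa, notMem_empty, if_false, ih]; exact_mod_cast sum_range_choose_col j n

lemma aa_step (T : Finset ℕ) (s t : ℕ) (hT : ∀ x ∈ T, x < s) (hts : t < s) (M : ℕ)
    (h : ∀ n j, t ≤ n → aa n T j = (Nat.choose j (n - t) * M : ℕ)) :
    ∀ n j, s ≤ n → aa n (insert s T) j = (Nat.choose j (n - s) * (Nat.choose s t * M) : ℕ) := by
  intro n j hn
  induction n, hn using Nat.le_induction generalizing j with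
  | base =>
    obtain ⟨s, rfl⟩ : ∃ r, s = r + 1 := ⟨s - 1, by omega⟩
    simp only [aa, mem_insert_self, if_true, aa_insert s (s + 1) (Nat.lt_succ_self s)]
    rw [sum_congr rfl fun i _ => h s i (by omega)]
    rw [← Nat.cast_sum, ← sum_mul, sum_range_choose_col, Nat.sub_self, Nat.choose_zero_right, one_mul,
      ← Nat.choose_symm hts.le]
    congr 3
    omega
  | succ n hn ih =>
    have h1 : n + 1 ∉ insert s T := by
      rw [mem_insert]
      rintro (h | h)
      · omega
      · have := hT _ h; omega
    simp only [aa, h1, if_false]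
    rw [sum_congr rfl fun i _ => ih i]
    rw [← Nat.cast_sum, ← sum_mul, sum_range_choose_col]
    congr 3
    omega

end Gen

section PosetCount

open Finset

variable {P : Type*} [Fintype P] [PartialOrder P] [OrderBot P]

lemma rk_strictMono {rk : P → ℕ} (hrk : IsRankFunction rk) {a b : P} (h : a < b) :
    rk a < rk b := by
  classical
  letI : LocallyFiniteOrder P := Fintype.toLocallyFiniteOrder
  have h' := lt_iff_transGen_covBy.1 h
  clear h
  induction h' with
  | single h => rw [hrk.2 _ _ h]; exact Nat.lt_succ_self _
  | tail h1 h2 ih =>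
    have h3 := hrk.2 _ _ h2
    have h4 := ih
    omega

lemma rk_iso {rk : P → ℕ} (hrk : IsRankFunction rk) {n : ℕ} {m : P}
    (e : Set.Icc (⊥ : P) m ≃o Finset (Fin n)) (A : Finset (Fin n)) :
    rk (e.symm A).1 = A.card := by
  classical
  induction A using Finset.induction_on with
  | empty =>
    have h1 : e.symm ∅ ≤ ⟨⊥, by simp⟩ := by
      rw [e.symm_apply_le]; exact Finset.empty_subset _
    have h2 : (e.symm ∅).1 = ⊥ := le_bot_iff.1 h1
    rw [h2, hrk.1]; rfl
  | insert a A ha ih =>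
    have h1 : e.symm A ⋖ e.symm (insert a A) :=
      (apply_covBy_apply_iff e.symm).2 (Finset.covBy_insert ha)
    have h2 : (e.symm A).1 ⋖ (e.symm (insert a A)).1 := by
      have hc : (Set.range (OrderEmbedding.subtype (fun x => x ∈ Set.Icc (⊥ : P) m))).OrdConnected := by
        have : Set.range (OrderEmbedding.subtype (fun x => x ∈ Set.Icc (⊥ : P) m)) = Set.Icc ⊥ m := by
          ext x; simp
        rw [this]; exact Set.ordConnected_Icc
      exact (hc.apply_covBy_apply_iff _).2 h1
    rw [hrk.2 _ _ h2, ih, card_insert_of_notMem ha]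

open Classical in
lemma card_below {rk : P → ℕ} (hrk : IsRankFunction rk) {n : ℕ} (hs : SimplicialOfRank P n)
    (y : P) (t : ℕ) (ht : t < rk y) :
    (univ.filter fun z : P => z ∈ Set.Iio y ∧ rk z = t).card = (rk y).choose t := by
  obtain ⟨m, hym, hm⟩ : ∃ m, y ≤ m ∧ IsMax m := by
    obtain ⟨m, h1, h2⟩ := Finite.exists_le_maximal (p := fun _ : P => True) (a := y) trivial
    exact ⟨m, h1, fun b hb => h2.2 trivial hb⟩
  obtain ⟨e⟩ := hs m hm
  set y' : Set.Icc (⊥ : P) m := ⟨y, bot_le, hym⟩ with hy'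
  have hcard : (e y').card = rk y := by rw [← rk_iso hrk e]; simp [hy']
  have : (univ.filter fun z : P => z ∈ Set.Iio y ∧ rk z = t)
      = (powersetCard t (e y')).image (fun A => (e.symm A).1) := by
    ext z
    simp only [mem_filter, mem_univ, true_and, Set.mem_Iio, mem_image, mem_powersetCard]
    constructor
    · rintro ⟨h1, h2⟩
      have hz : z ∈ Set.Icc (⊥ : P) m := ⟨bot_le, h1.le.trans hym⟩
      refine ⟨e ⟨z, hz⟩, ⟨?_, ?_⟩, by simp⟩
      · have : (⟨z, hz⟩ : Set.Icc (⊥ : P) m) ≤ y' := h1.le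
        exact e.monotone this
      · rw [← rk_iso hrk e]; simpa using h2
    · rintro ⟨A, ⟨h1, h2⟩, rfl⟩
      have h3 : rk (e.symm A).1 = t := by rw [rk_iso hrk e, h2]
      have h4 : e.symm A ≤ y' := by rw [e.symm_apply_le]; exact h1
      have h5 : (e.symm A).1 ≤ y := h4
      refine ⟨lt_of_le_of_ne h5 fun h => ?_, h3⟩
      rw [h] at h3; omega
  rw [this, card_image_of_injective, card_powersetCard, hcard]
  intro A B h
  exact e.symm.injective (Subtype.ext h)

open Classical in
/-- chains inside `U` with rank set `T` -/
def cnt (rk : P → ℕ) (U : Set P) (T : Finset ℕ) : ℕ :=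
  (univ.filter fun c : Finset P =>
    IsChain (· ≤ ·) (c : Set P) ∧ (⊥ : P) ∉ c ∧ c.image rk = T ∧ (c : Set P) ⊆ U).card

lemma flagF_eq_cnt (rk : P → ℕ) (T : Finset ℕ) : flagF rk T = cnt rk Set.univ T := by
  classical
  unfold flagF cnt
  rw [Nat.card_eq_fintype_card, Fintype.card_subtype]
  congr 1
  ext c
  simp

lemma cnt_empty (rk : P → ℕ) (U : Set P) : cnt rk U ∅ = 1 := by
  classical
  unfold cnt
  rw [card_eq_one]
  refine ⟨∅, ?_⟩
  ext c
  simp only [mem_filter, mem_univ, true_and, image_eq_empty, mem_singleton]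
  constructor
  · rintro ⟨_, _, h, _⟩; exact h
  · rintro rfl; simp

open Classical in
lemma cnt_insert {rk : P → ℕ} (hrk : IsRankFunction rk) (U : Set P) (hU : IsLowerSet U)
    (T : Finset ℕ) (s : ℕ) (hs : 1 ≤ s) (hT : ∀ x ∈ T, x < s) :
    cnt rk U (insert s T) = ∑ y ∈ univ.filter (fun y : P => y ∈ U ∧ rk y = s),
      cnt rk (Set.Iio y) T := by
  unfold cnt
  rw [← card_sigma]
  symm
  refine card_bij (fun p _ => insert p.1 p.2) ?_ ?_ ?_
  · rintro ⟨y, c⟩ h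
    simp only [mem_sigma, mem_filter, mem_univ, true_and] at h ⊢
    obtain ⟨⟨hyU, hys⟩, hc, hb, him, hsub⟩ := h
    refine ⟨?_, ?_, ?_, ?_⟩
    · rw [coe_insert]
      exact hc.insert fun b hb' _ => Or.inr (le_of_lt (hsub hb'))
    · rw [mem_insert]
      rintro (h | h)
      · rw [← h, hrk.1] at hys; omega
      · exact hb h
    · rw [image_insert, him, hys]
    · rw [coe_insert]
      rintro x (rfl | hx)
      · exact hyU
      · exact hU (le_of_lt (hsub hx)) hyU
  · rintro ⟨y, c⟩ h ⟨y', c'⟩ h' heq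
    simp only [mem_sigma, mem_filter, mem_univ, true_and] at h h' heq
    obtain ⟨⟨hyU, hys⟩, hc, hb, him, hsub⟩ := h
    obtain ⟨⟨hyU', hys'⟩, hc', hb', him', hsub'⟩ := h'
    have hyy : y = y' := by
      by_contra hne
      have h1 : y ∈ insert y' c' := heq ▸ mem_insert_self y c
      rcases mem_insert.1 h1 with h1 | h1
      · exact hne h1
      · have := rk_strictMono hrk (show y < y' from hsub' h1)
        omega
    subst hyy
    have n1 : y ∉ c := fun h => lt_irrefl y (hsub h)
    have n2 : y ∉ c' := fun h => lt_irrefl y (hsub' h)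
    have : c = c' := by rw [← erase_insert n1, heq, erase_insert n2]
    rw [this]
  · intro c h
    simp only [mem_filter, mem_univ, true_and] at h
    obtain ⟨hc, hb, him, hsub⟩ := h
    obtain ⟨y, hyc, hys⟩ := mem_image.1 (him ▸ mem_insert_self s T : s ∈ c.image rk)
    have hlt : ∀ z ∈ c, z ≠ y → z < y := by
      intro z hz hne
      rcases hc hz hyc hne with h | h
      · exact lt_of_le_of_ne h hne
      · have h1 := rk_strictMono hrk (lt_of_le_of_ne h hne.symm)
        have h2 : rk z ∈ insert s T := him ▸ mem_image_of_mem rk hz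
        rcases mem_insert.1 h2 with h2 | h2
        · omega
        · have := hT _ h2; omega
    refine ⟨⟨y, c.erase y⟩, ?_, insert_erase hyc⟩
    simp only [mem_sigma, mem_filter, mem_univ, true_and]
    refine ⟨⟨hsub hyc, hys⟩, hc.mono (by simp), fun h => hb (mem_of_mem_erase h), ?_, ?_⟩
    · ext t
      simp only [mem_image, mem_erase]
      constructor
      · rintro ⟨z, ⟨hne, hz⟩, rfl⟩
        have h1 := rk_strictMono hrk (hlt z hz hne)
        have h2 : rk z ∈ insert s T := him ▸ mem_image_of_mem rk hz
        rcases mem_insert.1 h2 with h2 | h2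
        · omega
        · exact h2
      · intro ht
        obtain ⟨z, hz, hzt⟩ := mem_image.1 (him ▸ mem_insert_of_mem ht : t ∈ c.image rk)
        refine ⟨z, ⟨?_, hz⟩, hzt⟩
        rintro rfl
        have := hT t ht
        omega
    · intro z hz
      simp only [coe_erase, Set.mem_sdiff, Set.mem_singleton_iff, mem_coe] at hz
      exact hlt z hz.1 hz.2

lemma rk_eq_zero {rk : P → ℕ} (hrk : IsRankFunction rk) (y : P) : rk y = 0 ↔ y = ⊥ := by
  constructor
  · intro h
    by_contra hne
    have := rk_strictMono hrk (bot_lt_iff_ne_bot.2 hne)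
    omega
  · rintro rfl; exact hrk.1

open Classical in
lemma main_count {rk : P → ℕ} (hrk : IsRankFunction rk) {n : ℕ} (hs : SimplicialOfRank P n)
    (T : Finset ℕ) : (∀ x ∈ T, 1 ≤ x) → ∃ M : ℕ,
      (∀ n j, T.sup id ≤ n → aa n T j = (Nat.choose j (n - T.sup id) * M : ℕ)) ∧
      ∀ U : Set P, IsLowerSet U → U.Nonempty →
        cnt rk U T = (univ.filter fun y : P => y ∈ U ∧ rk y = T.sup id).card * M := by
  induction T using Finset.induction_on_max with
  | empty =>
    intro _
    refine ⟨1, fun n j _ => by simp [aa_empty], fun U hU hne => ?_⟩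
    rw [cnt_empty, mul_one, eq_comm, card_eq_one]
    refine ⟨⊥, ?_⟩
    ext y
    simp only [sup_empty, Nat.bot_eq_zero, rk_eq_zero hrk, mem_filter, mem_univ, true_and,
      mem_singleton, and_iff_right_iff_imp]
    rintro rfl
    obtain ⟨u, hu⟩ := hne
    exact hU bot_le hu
  | insert s T hT ih =>
    intro h1
    obtain ⟨M, hM1, hM2⟩ := ih fun x hx => h1 x (mem_insert_of_mem hx)
    have hs1 : 1 ≤ s := h1 s (mem_insert_self _ _)
    have hlt : T.sup id < s := (Finset.sup_lt_iff (by simp; omega)).2 hT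
    have hsup : (insert s T).sup id = s := by
      rw [sup_insert]; simpa using hlt.le
    rw [hsup]
    refine ⟨Nat.choose s (T.sup id) * M, aa_step T s _ hT hlt M hM1, fun U hU hne => ?_⟩
    rw [cnt_insert hrk U hU T s hs1 hT, ← smul_eq_mul, ← sum_const]
    refine sum_congr rfl fun y hy => ?_
    simp only [mem_filter, mem_univ, true_and] at hy
    have hy0 : y ≠ ⊥ := fun h => by
      have := (rk_eq_zero hrk y).2 h; omega
    rw [hM2 _ (isLowerSet_Iio y) ⟨⊥, bot_lt_iff_ne_bot.2 hy0⟩]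
    have hcb := card_below hrk hs y (T.sup id) (by omega)
    rw [hy.2] at hcb
    rw [← hcb]
    congr!

lemma fh (rk : P → ℕ) (n : ℕ) : 
    ∑ k ∈ range (n + 1), C (hvec rk n k : ℝ) * X ^ k * (1 + X) ^ (n - k)
      = ∑ i ∈ range (n + 1), C (fvec rk i : ℝ) * X ^ i := by
  refine Polynomial.eq_of_infinite_eval_eq _ _ ((Set.Ioi_infinite (0 : ℝ)).mono ?_)
  intro y hy
  have hy : 0 < y := hy
  have hy1 : (1 + y) ≠ 0 := by positivity
  simp only [Set.mem_ofPred_eq, eval_finsetSum, eval_mul, eval_C, eval_pow, eval_X, eval_add, eval_one]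
  have hdeg : (hPoly rk n).natDegree < n + 1 := by
    refine Nat.lt_succ_of_le (natDegree_sum_le_of_forall_le _ _ fun i hi => ?_)
    have hi : i ≤ n := by simpa [Nat.lt_succ_iff] using hi
    have e1 : (C (fvec rk i : ℤ) * X ^ i : ℤ[X]).natDegree ≤ i := natDegree_C_mul_X_pow_le _ _
    have e2 : ((1 - X : ℤ[X]) ^ (n - i)).natDegree ≤ n - i := by
      refine (natDegree_pow_le).trans ?_
      have : (1 - X : ℤ[X]).natDegree ≤ 1 := by
        refine (natDegree_sub_le _ _).trans ?_
        simp
      nlinarith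
    refine natDegree_mul_le.trans ?_
    omega
  have ev1 : ((hPoly rk n).map (Int.castRingHom ℝ)).eval (y / (1 + y))
      = ∑ k ∈ range (n + 1), (hvec rk n k : ℝ) * (y / (1 + y)) ^ k := by
    rw [eval_eq_sum_range' (lt_of_le_of_lt natDegree_map_le hdeg)]
    simp [hvec]
  have ev2 : ((hPoly rk n).map (Int.castRingHom ℝ)).eval (y / (1 + y))
      = ∑ i ∈ range (n + 1), (fvec rk i : ℝ) * (y / (1 + y)) ^ i * (1 - y / (1 + y)) ^ (n - i) := by
    simp [hPoly, Polynomial.map_sum, eval_finsetSum]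
  have key : ∀ k ∈ range (n + 1), (1 + y) ^ n = (1 + y) ^ k * (1 + y) ^ (n - k) := by
    intro k hk
    rw [← pow_add]; congr 1; simp only [mem_range] at hk; omega
  have l1 : ∑ k ∈ range (n + 1), (hvec rk n k : ℝ) * y ^ k * (1 + y) ^ (n - k)
      = (1 + y) ^ n * ∑ k ∈ range (n + 1), (hvec rk n k : ℝ) * (y / (1 + y)) ^ k := by
    rw [mul_sum]
    refine sum_congr rfl fun k hk => ?_
    rw [key k hk, div_pow]
    field_simp
  have l2 : ∑ k ∈ range (n + 1), (fvec rk k : ℝ) * y ^ k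
      = (1 + y) ^ n * ∑ i ∈ range (n + 1),
        (fvec rk i : ℝ) * (y / (1 + y)) ^ i * (1 - y / (1 + y)) ^ (n - i) := by
    rw [mul_sum]
    refine sum_congr rfl fun k hk => ?_
    have : 1 - y / (1 + y) = 1 / (1 + y) := by field_simp; ring
    rw [key k hk, this, div_pow, div_pow, one_pow]
    field_simp
  rw [l1, l2, ← ev1, ← ev2]

lemma fvec_eq (rk : P → ℕ) (n t : ℕ) (ht : t ≤ n) :
    (fvec rk t : ℤ) = ∑ k ∈ range (n + 1), hvec rk n k * (Nat.choose (n - k) (n - t) : ℤ) := by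
  have h := congrArg (fun p => p.coeff t) (fh rk n)
  simp only [finsetSum_coeff] at h
  have e2 : ∑ i ∈ range (n + 1), (C (fvec rk i : ℝ) * X ^ i).coeff t = (fvec rk t : ℝ) := by
    simp only [coeff_C_mul_X_pow]
    rw [sum_ite_eq]
    simp [Nat.lt_succ_iff, ht]
  rw [e2] at h
  have e1 : ∀ k ∈ range (n + 1), (C (hvec rk n k : ℝ) * X ^ k * (1 + X) ^ (n - k)).coeff t
      = (hvec rk n k : ℝ) * (Nat.choose (n - k) (n - t) : ℝ) := by
    intro k hk
    simp only [mem_range] at hk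
    rw [mul_assoc, coeff_C_mul, coeff_X_pow_mul']
    split_ifs with hkt
    · rw [coeff_one_add_X_pow, ← Nat.choose_symm (by omega : t - k ≤ n - k)]
      congr 3; omega
    · rw [Nat.choose_eq_zero_of_lt (by omega)]; simp
  rw [sum_congr rfl e1] at h
  exact_mod_cast h.symm

lemma flagH_eq {rk : P → ℕ} (hrk : IsRankFunction rk) {n : ℕ} (hs : SimplicialOfRank P n)
    (S : Finset ℕ) (hS : S ⊆ Icc 1 n) :
    flagH rk S = ∑ k ∈ range (n + 1), hvec rk n k * bb n S (n - k) := by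
  classical
  have hF : ∀ T ∈ S.powerset, (flagF rk T : ℤ)
      = ∑ k ∈ range (n + 1), hvec rk n k * aa n T (n - k) := by
    intro T hT
    have hT' : T ⊆ Icc 1 n := (mem_powerset.1 hT).trans hS
    obtain ⟨M, h1, h2⟩ := main_count hrk hs T fun x hx => (mem_Icc.1 (hT' hx)).1
    have hsup : T.sup id ≤ n := Finset.sup_le fun x hx => (mem_Icc.1 (hT' hx)).2
    rw [flagF_eq_cnt, h2 _ isLowerSet_univ ⟨⊥, trivial⟩]
    have : ∀ m, m = fvec rk (T.sup id) → ((m * M : ℕ) : ℤ) = (fvec rk (T.sup id) : ℤ) * M := by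
      rintro m rfl; push_cast; rfl
    rw [this _ (by unfold fvec; congr 1; ext y; simp)]
    rw [fvec_eq rk n _ hsup, sum_mul]
    refine sum_congr rfl fun k _ => ?_
    rw [h1 n (n - k) hsup]
    push_cast
    ring
  unfold flagH
  rw [sum_congr rfl fun T hT => by rw [hF T hT, mul_sum]]
  rw [sum_comm]
  refine sum_congr rfl fun k hk => ?_
  rw [← bb_eq n S (n - k) hS (Nat.sub_le _ _), mul_sum]
  refine sum_congr rfl fun T _ => ?_
  ring

lemma hvec_zero {rk : P → ℕ} (hrk : IsRankFunction rk) (n : ℕ) : hvec rk n 0 = 1 := by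
  have h := fvec_eq rk n 0 (Nat.zero_le _)
  rw [sum_range_succ'] at h
  have h0 : ∑ k ∈ range n, hvec rk n (k + 1) * (Nat.choose (n - (k + 1)) (n - 0) : ℤ) = 0 := by
    refine sum_eq_zero fun k hk => ?_
    simp only [mem_range] at hk
    rw [Nat.choose_eq_zero_of_lt (by omega)]; simp
  rw [h0] at h
  have hf : fvec rk 0 = 1 := by
    unfold fvec
    rw [card_eq_one]
    exact ⟨⊥, by ext y; simp [rk_eq_zero hrk]⟩
  rw [hf] at h
  simpa using h.symm

lemma isolated_card {n : ℕ} {S : Finset ℕ} (hS : S ⊆ Icc 2 n) (hi : IsolatedSet S) :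
    2 * S.card ≤ n := by
  have hdisj : Disjoint S (S.image (· + 1)) := by
    rw [disjoint_left]
    intro a ha h
    obtain ⟨b, hb, rfl⟩ := mem_image.1 h
    exact hi b hb ha
  have hsub : S ∪ S.image (· + 1) ⊆ Icc 2 (n + 1) := by
    intro x hx
    rcases mem_union.1 hx with h | h
    · have := hS h
      simp only [mem_Icc] at this ⊢; omega
    · obtain ⟨b, hb, rfl⟩ := mem_image.1 h
      have := hS hb
      simp only [mem_Icc] at this ⊢; omega
  have := card_le_card hsub
  rw [card_union_of_disjoint hdisj, card_image_of_injective _ (add_left_injective 1), Nat.card_Icc] at this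
  omega

lemma exists_w {z : ℂ} (hz : z.im ≠ 0) (h1 : 1 + z ≠ 0) :
    ∃ w : ℂ, 0 < w.re ∧ w ^ 2 = z / (1 + z) ^ 2 := by
  obtain ⟨w, hw⟩ : ∃ w : ℂ, w ^ 2 = z / (1 + z) ^ 2 := by
    obtain ⟨w, hw⟩ := IsAlgClosed.exists_pow_nat_eq (z / (1 + z) ^ 2) (n := 2) (by norm_num)
    exact ⟨w, hw⟩
  rcases lt_trichotomy w.re 0 with h | h | h
  · exact ⟨-w, by simpa using h, by rw [neg_sq, hw]⟩
  · exfalso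
    have h2 : w ^ 2 * (1 + z) ^ 2 = z := by rw [hw]; field_simp
    have hw2 : w = (w.im : ℂ) * Complex.I := by
      apply Complex.ext <;> simp [h]
    set t := w.im
    have h3 : ((t ^ 2 : ℝ) : ℂ) * (1 + z) ^ 2 + z = 0 := by
      rw [hw2, mul_pow, Complex.I_sq] at h2
      push_cast
      linear_combination -h2
    have hre := congrArg Complex.re h3
    have him := congrArg Complex.im h3
    rw [Complex.add_re, Complex.re_ofReal_mul, pow_two (1 + z)] at hre
    rw [Complex.add_im, Complex.im_ofReal_mul, pow_two (1 + z)] at him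
    simp only [Complex.mul_re, Complex.mul_im, Complex.add_re, Complex.add_im, Complex.one_re,
      Complex.one_im, Complex.zero_re, Complex.zero_im] at hre him
    set u := z.re
    set v := z.im
    have a1 : 2 * t ^ 2 * (1 + u) + 1 = 0 := by
      apply mul_right_cancel₀ hz
      linear_combination him
    have ht : 0 < t ^ 2 := by
      rcases eq_or_ne t 0 with h | h
      · rw [h] at a1; norm_num at a1
      · positivity
    have a2 : u ^ 2 + v ^ 2 = 1 := by
      apply mul_left_cancel₀ ht.ne'
      linear_combination (-1) * hre + u * a1
    have hu : 1 + u < 0 := by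
      by_contra hc
      push Not at hc
      have := mul_nonneg ht.le hc
      linarith
    nlinarith [sq_nonneg v]
  · exact ⟨w, h, hw⟩

lemma chow_gamma {rk : P → ℕ} (hrk : IsRankFunction rk) {n : ℕ} (hs : SimplicialOfRank P n)
    (y : ℂ) : ∑ S ∈ (Icc 2 n).powerset.filter IsolatedSet, (flagH rk S : ℂ) * y ^ S.card
      = ∑ i ∈ range (n + 1), ((hvec rk n (n - i) : ℝ) : ℂ) * seqF y n i := by
  have e : ∀ S ∈ (Icc 2 n).powerset.filter IsolatedSet, (flagH rk S : ℂ) * y ^ S.card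
      = ∑ k ∈ range (n + 1), (hvec rk n k : ℂ) * ((bb n S (n - k) : ℂ) * y ^ S.card) := by
    intro S hS
    have hS' : S ⊆ Icc 1 n := (mem_powerset.1 (mem_filter.1 hS).1).trans
      (Icc_subset_Icc (by norm_num) le_rfl)
    rw [flagH_eq hrk hs S hS']
    push_cast
    rw [sum_mul]
    exact sum_congr rfl fun k _ => by ring
  rw [sum_congr rfl e, sum_comm, ← sum_range_reflect (fun k => ∑ S ∈ _, _)]
  refine sum_congr rfl fun i hi => ?_
  simp only [mem_range] at hi
  rw [← (gen_all y n).1 i, mul_sum]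
  have h1 : n + 1 - 1 - i = n - i := by omega
  have h2 : n - (n - i) = i := by omega
  simp [h1, h2]

end PosetCount

end

theorem statement0 {P : Type*} [Fintype P] [PartialOrder P] [OrderBot P]
    (n : ℕ) (rk : P → ℕ)
    (hrk : IsRankFunction rk)
    (hsimp : SimplicialOfRank P n)
    (hpos : ∀ k, 0 ≤ hvec rk n k) :
    RealRooted (chowPoly rk n) := by
  classical
  intro z hz
  by_contra him
  have h0 := (Polynomial.mem_roots'.1 hz).2
  have h1 : 1 + z ≠ 0 := by
    intro h
    apply him
    have := congrArg Complex.im h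
    simpa using this
  obtain ⟨w, hw, hw2⟩ := exists_w him h1
  have hev : ((chowPoly rk n).map (algebraMap ℝ ℂ)).eval z = (1 + z) ^ n *
      ∑ S ∈ (Finset.Icc 2 n).powerset.filter IsolatedSet, (flagH rk S : ℂ) * (w ^ 2) ^ S.card := by
    simp only [chowPoly, Polynomial.map_sum, Polynomial.eval_finsetSum]
    rw [Finset.mul_sum]
    refine Finset.sum_congr rfl fun S hS => ?_
    have hS' := Finset.mem_filter.1 hS
    have hc := isolated_card (Finset.mem_powerset.1 hS'.1) hS'.2
    have hn : (1 + z) ^ n = (1 + z) ^ (2 * S.card) * (1 + z) ^ (n - 2 * S.card) := by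
      rw [← pow_add]; congr 1; omega
    rw [hw2, div_pow, ← pow_mul, hn]
    simp [Polynomial.smul_eq_C_mul]
    field_simp
  rw [Polynomial.IsRoot.def, hev, chow_gamma hrk hsimp] at h0
  rcases mul_eq_zero.1 h0 with h | h
  · exact h1 (by by_contra hne; exact pow_ne_zero n hne h)
  · refine gamma_ne_zero hw n (fun i => (hvec rk n (n - i) : ℝ)) (fun i => ?_) ?_ h
    · exact_mod_cast hpos _
    · simp [hvec_zero hrk]
end

section
/- Let P be a finite graded simplicial poset of rank n with positive h-vector (h_0, …, h_n), i.e. h_i ≥ 0 for all i, and let P̂ be P with a top element 1̂ adjoined. Then the augmented Chow polynomial H^aug_{P̂}(x) = Σ_{S ⊆ {1,…,n}, S isolated} β_{P̂}(S) · x^{|S|} · (1+x)^{n+1−2|S|} is real-rooted (all of its complex roots are real). -/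
open Polynomial

namespace ChowAug

/-- planar cross product -/
def cr (a b : ℂ) : ℝ := a.re * b.im - a.im * b.re

lemma cr_add_left (a b c : ℂ) : cr (a + b) c = cr a c + cr b c := by
  simp [cr]; ring
lemma cr_add_right (a b c : ℂ) : cr a (b + c) = cr a b + cr a c := by
  simp [cr]; ring
lemma cr_self (a : ℂ) : cr a a = 0 := by simp [cr]; ring
lemma cr_zero_left (a : ℂ) : cr 0 a = 0 := by simp [cr]
lemma cr_zero_right (a : ℂ) : cr a 0 = 0 := by simp [cr]
lemma cr_mul_mul (z a b : ℂ) : cr (z * a) (z * b) = (z.re ^ 2 + z.im ^ 2) * cr a b := by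
  simp [cr]; ring
lemma cr_mul_mul_nonneg (z : ℂ) {a b : ℂ} (h : 0 ≤ cr a b) : 0 ≤ cr (z * a) (z * b) := by
  rw [cr_mul_mul]; positivity
lemma cr_self_mul (z a : ℂ) : cr a (z * a) = (a.re ^ 2 + a.im ^ 2) * z.im := by
  simp [cr]; ring
lemma cr_self_mul_nonneg {z : ℂ} (hz : 0 < z.im) (a : ℂ) : 0 ≤ cr a (z * a) := by
  rw [cr_self_mul]; positivity

lemma cr_sum_left {ι : Type*} (s : Finset ι) (f : ι → ℂ) (b : ℂ) :
    cr (∑ i ∈ s, f i) b = ∑ i ∈ s, cr (f i) b := by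
  classical
  induction s using Finset.induction_on with
  | empty => simp [cr_zero_left]
  | insert a s ha ih => rw [Finset.sum_insert ha, Finset.sum_insert ha, cr_add_left, ih]

lemma cr_sum_right {ι : Type*} (s : Finset ι) (f : ι → ℂ) (b : ℂ) :
    cr b (∑ i ∈ s, f i) = ∑ i ∈ s, cr b (f i) := by
  classical
  induction s using Finset.induction_on with
  | empty => simp [cr_zero_right]
  | insert a s ha ih => rw [Finset.sum_insert ha, Finset.sum_insert ha, cr_add_right, ih]

lemma cr_sum_sum_nonneg {ι κ : Type*} (s : Finset ι) (t : Finset κ) (f : ι → ℂ) (g : κ → ℂ)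
    (h : ∀ i ∈ s, ∀ j ∈ t, 0 ≤ cr (f i) (g j)) : 0 ≤ cr (∑ i ∈ s, f i) (∑ j ∈ t, g j) := by
  rw [cr_sum_left]
  refine Finset.sum_nonneg fun i hi => ?_
  rw [cr_sum_right]
  exact Finset.sum_nonneg fun j hj => h i hi j hj

/-- the state recursion -/
def st (z : ℂ) : ℕ → (ℕ → ℂ) × (ℕ → ℂ)
  | 0 => (fun _ => 1, fun _ => 0)
  | n + 1 => (fun k => ∑ j ∈ Finset.Ico k (n + 1), ((st z n).1 j + z * (st z n).2 j),
              fun k => ∑ j ∈ Finset.Ico 0 k, (st z n).1 j)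

/-- the value of the `k`-th polynomial -/
def pp (z : ℂ) (n k : ℕ) : ℂ := (st z n).1 k + z * (st z n).2 k

structure Inv (z : ℂ) (n : ℕ) (A e : ℕ → ℂ) : Prop where
  i1 : ∀ i j, i ≤ j → j ≤ n → 0 ≤ cr (A i) (A j)
  i2 : ∀ i j, i ≤ n → j ≤ n → 0 ≤ cr (e i) (A j)
  i3 : ∀ i j, i ≤ n → j ≤ n → 0 ≤ cr (A i) (z * e j)
  i5 : ∀ i j, i ≤ j → j ≤ n → 0 ≤ cr (A i + z * e i) (A j + z * e j)
  i6 : ∀ i j, i ≤ j → j ≤ n → 0 ≤ cr (A j + z * e j) (z * (A i + z * e i))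
  i7 : ∀ i j, i ≤ j → j ≤ n → 0 ≤ cr (A j) (z * A i)

lemma Inv.step {z : ℂ} (hz : 0 < z.im) {n : ℕ} {A e : ℕ → ℂ} (h : Inv z n A e) :
    Inv z (n + 1) (fun k => ∑ j ∈ Finset.Ico k (n + 1), (A j + z * e j))
      (fun k => ∑ j ∈ Finset.Ico 0 k, A j) := by
  obtain ⟨i1, i2, i3, i5, i6, i7⟩ := h
  set p : ℕ → ℂ := fun j => A j + z * e j with hp
  change ∀ i j, i ≤ j → j ≤ n → 0 ≤ cr (p i) (p j) at i5
  change ∀ i j, i ≤ j → j ≤ n → 0 ≤ cr (p j) (z * p i) at i6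
  change Inv z (n + 1) (fun k => ∑ j ∈ Finset.Ico k (n + 1), p j)
      (fun k => ∑ j ∈ Finset.Ico 0 k, A j)
  have pA : ∀ i j, i ≤ j → j ≤ n → 0 ≤ cr (p j) (z * A i) := by
    intro i j hij hj
    have h1 := i7 i j hij hj
    have h2 := cr_mul_mul_nonneg z (i2 j i hj (hij.trans hj))
    simp only [hp, cr_add_left]; linarith
  have Ap : ∀ i j, i ≤ j → j ≤ n → 0 ≤ cr (A i) (p j) := by
    intro i j hij hj
    have h1 := i1 i j hij hj
    have h2 := i3 i j (hij.trans hj) hj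
    simp only [hp, cr_add_right]; linarith
  have split : ∀ (f : ℕ → ℂ) (a b c : ℕ), a ≤ b → b ≤ c →
      ∑ j ∈ Finset.Ico a c, f j = ∑ j ∈ Finset.Ico a b, f j + ∑ j ∈ Finset.Ico b c, f j :=
    fun f a b c h1 h2 => (Finset.sum_Ico_consecutive f h1 h2).symm
  -- the key decomposition of partial sums
  have P5 : ∀ k l, k ≤ l → l ≤ n + 1 → 
      ∑ j ∈ Finset.Ico k l, p j = ∑ j ∈ Finset.Ico k l, A j + z * ∑ j ∈ Finset.Ico k l, e j := by
    intro k l _ _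
    simp only [hp, Finset.sum_add_distrib, Finset.mul_sum]
  refine ⟨?_, ?_, ?_, ?_, ?_, ?_⟩
  · intro i j hij hj
    rw [split p i j (n + 1) hij hj, cr_add_left, cr_self, add_zero]
    apply cr_sum_sum_nonneg
    intro a ha b hb
    simp only [Finset.mem_Ico] at ha hb
    exact i5 a b (by omega) (by omega)
  · intro i j hi hj
    rw [P5 j (n + 1) hj le_rfl, cr_add_right]
    have h1 : 0 ≤ cr (∑ j ∈ Finset.Ico 0 i, A j) (z * ∑ j ∈ Finset.Ico j (n + 1), e j) := by
      rw [Finset.mul_sum]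
      apply cr_sum_sum_nonneg
      intro a ha b hb
      simp only [Finset.mem_Ico] at ha hb
      exact i3 a b (by omega) (by omega)
    have h2 : 0 ≤ cr (∑ j ∈ Finset.Ico 0 i, A j) (∑ j ∈ Finset.Ico j (n + 1), A j) := by
      rcases le_total i j with hij | hij
      · apply cr_sum_sum_nonneg
        intro a ha b hb
        simp only [Finset.mem_Ico] at ha hb
        exact i1 a b (by omega) (by omega)
      · rw [split A 0 j i (by omega) hij, cr_add_left, split A j i (n + 1) hij hi,
          cr_add_right (∑ k ∈ Finset.Ico j i, A k), cr_self, ← split A j i (n + 1) hij hi]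
        have h3 : 0 ≤ cr (∑ j ∈ Finset.Ico 0 j, A j) (∑ j ∈ Finset.Ico j (n + 1), A j) := by
          apply cr_sum_sum_nonneg
          intro a ha b hb
          simp only [Finset.mem_Ico] at ha hb
          exact i1 a b (by omega) (by omega)
        have h4 : 0 ≤ cr (∑ j ∈ Finset.Ico j i, A j) (∑ j ∈ Finset.Ico i (n + 1), A j) := by
          apply cr_sum_sum_nonneg
          intro a ha b hb
          simp only [Finset.mem_Ico] at ha hb
          exact i1 a b (by omega) (by omega)
        linarith
    linarith
  · intro i j hi hj
    rw [P5 i (n + 1) hi le_rfl, cr_add_left]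
    have h1 : 0 ≤ cr (z * ∑ j ∈ Finset.Ico i (n + 1), e j) (z * ∑ j ∈ Finset.Ico 0 j, A j) := by
      apply cr_mul_mul_nonneg
      apply cr_sum_sum_nonneg
      intro a ha b hb
      simp only [Finset.mem_Ico] at ha hb
      exact i2 a b (by omega) (by omega)
    have h2 : 0 ≤ cr (∑ j ∈ Finset.Ico i (n + 1), A j) (z * ∑ j ∈ Finset.Ico 0 j, A j) := by
      have gen : ∀ a b c d, c ≤ d → d ≤ a → b ≤ n + 1 →
          0 ≤ cr (∑ j ∈ Finset.Ico a b, A j) (z * ∑ j ∈ Finset.Ico c d, A j) := by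
        intro a b c d _ _ _
        rw [Finset.mul_sum]
        apply cr_sum_sum_nonneg
        intro a ha b hb
        simp only [Finset.mem_Ico] at ha hb
        exact i7 b a (by omega) (by omega)
      rcases le_total j i with hij | hij
      · exact gen _ _ _ _ (by omega) hij le_rfl
      · rw [split A i j (n + 1) hij hj, split A 0 i j (by omega) hij, mul_add]
        simp only [cr_add_left, cr_add_right]
        have g1 := gen i j 0 i (by omega) le_rfl hj
        have g2 := cr_self_mul_nonneg hz (∑ j ∈ Finset.Ico i j, A j)
        have g3 := gen j (n + 1) 0 i (by omega) hij le_rfl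
        have g4 := gen j (n + 1) i j (by omega) le_rfl le_rfl
        linarith
    linarith
  · intro k l hkl hl
    rw [split p k l (n + 1) hkl hl, split A 0 k l (by omega) hkl, mul_add]
    have hPB : 0 ≤ cr (∑ j ∈ Finset.Ico k l, p j) (z * ∑ j ∈ Finset.Ico k l, A j) := by
      rw [P5 k l hkl hl, cr_add_left]
      have g1 := cr_self_mul_nonneg hz (∑ j ∈ Finset.Ico k l, A j)
      have g2 : 0 ≤ cr (z * ∑ j ∈ Finset.Ico k l, e j) (z * ∑ j ∈ Finset.Ico k l, A j) := by
        apply cr_mul_mul_nonneg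
        apply cr_sum_sum_nonneg
        intro a ha b hb
        simp only [Finset.mem_Ico] at ha hb
        exact i2 a b (by omega) (by omega)
      linarith
    have a1 : 0 ≤ cr (∑ j ∈ Finset.Ico k l, p j) (∑ j ∈ Finset.Ico l (n + 1), p j) := by
      apply cr_sum_sum_nonneg
      intro a ha b hb
      simp only [Finset.mem_Ico] at ha hb
      exact i5 a b (by omega) (by omega)
    have a2 : 0 ≤ cr (∑ j ∈ Finset.Ico k l, p j) (z * ∑ j ∈ Finset.Ico 0 k, A j) := by
      rw [Finset.mul_sum]
      apply cr_sum_sum_nonneg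
      intro a ha b hb
      simp only [Finset.mem_Ico] at ha hb
      exact pA b a (by omega) (by omega)
    have a3 : 0 ≤ cr (∑ j ∈ Finset.Ico l (n + 1), p j) (z * ∑ j ∈ Finset.Ico k l, A j) := by
      rw [Finset.mul_sum]
      apply cr_sum_sum_nonneg
      intro a ha b hb
      simp only [Finset.mem_Ico] at ha hb
      exact pA b a (by omega) (by omega)
    have a4 : 0 ≤ cr (z * ∑ j ∈ Finset.Ico 0 k, A j) (z * ∑ j ∈ Finset.Ico k l, A j) := by
      apply cr_mul_mul_nonneg
      apply cr_sum_sum_nonneg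
      intro a ha b hb
      simp only [Finset.mem_Ico] at ha hb
      exact i1 a b (by omega) (by omega)
    generalize (∑ j ∈ Finset.Ico k l, p j) = X1 at *
    generalize (∑ j ∈ Finset.Ico l (n + 1), p j) = X2 at *
    generalize (z * ∑ j ∈ Finset.Ico 0 k, A j) = X3 at *
    generalize (z * ∑ j ∈ Finset.Ico k l, A j) = X4 at *
    have e1 : cr (X1 + X2 + X3) (X2 + (X3 + X4))
        = cr X1 X2 + cr X1 X3 + cr X1 X4 + cr X2 X4 + cr X3 X4 := by
      simp only [cr, Complex.add_re, Complex.add_im]; ring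
    rw [e1]; linarith
  · intro k l hkl hl
    rw [split p k l (n + 1) hkl hl, split A 0 k l (by omega) hkl]
    have b1 := cr_self_mul_nonneg hz (∑ j ∈ Finset.Ico l (n + 1), p j + z * ∑ j ∈ Finset.Ico 0 k, A j)
    have b2 : 0 ≤ cr (∑ j ∈ Finset.Ico k l, A j) (∑ j ∈ Finset.Ico k l, p j) := by
      rw [P5 k l hkl hl, cr_add_right, cr_self, zero_add, Finset.mul_sum]
      apply cr_sum_sum_nonneg
      intro a ha b hb
      simp only [Finset.mem_Ico] at ha hb
      exact i3 a b (by omega) (by omega)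
    have b3 : 0 ≤ cr (∑ j ∈ Finset.Ico l (n + 1), p j) (z * ∑ j ∈ Finset.Ico k l, p j) := by
      rw [Finset.mul_sum]
      apply cr_sum_sum_nonneg
      intro a ha b hb
      simp only [Finset.mem_Ico] at ha hb
      exact i6 b a (by omega) (by omega)
    have b4 : 0 ≤ cr (∑ j ∈ Finset.Ico 0 k, A j) (∑ j ∈ Finset.Ico k l, p j) := by
      apply cr_sum_sum_nonneg
      intro a ha b hb
      simp only [Finset.mem_Ico] at ha hb
      exact Ap a b (by omega) (by omega)
    have b5 : 0 ≤ cr (∑ j ∈ Finset.Ico k l, A j) (∑ j ∈ Finset.Ico l (n + 1), p j) := by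
      apply cr_sum_sum_nonneg
      intro a ha b hb
      simp only [Finset.mem_Ico] at ha hb
      exact Ap a b (by omega) (by omega)
    have b6 : 0 ≤ cr (∑ j ∈ Finset.Ico k l, A j) (z * ∑ j ∈ Finset.Ico 0 k, A j) := by
      rw [Finset.mul_sum]
      apply cr_sum_sum_nonneg
      intro a ha b hb
      simp only [Finset.mem_Ico] at ha hb
      exact i7 b a (by omega) (by omega)
    have c2 := cr_mul_mul_nonneg z b2
    have c4 := cr_mul_mul_nonneg z b4
    have c5 := cr_mul_mul_nonneg z b5
    have c6 := cr_mul_mul_nonneg z b6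
    simp only [mul_add, cr_add_left, cr_add_right] at *
    linarith
  · intro i j hij hj
    rw [split p i j (n + 1) hij hj, mul_add, cr_add_right]
    have g1 := cr_self_mul_nonneg hz (∑ j ∈ Finset.Ico j (n + 1), p j)
    have g2 : 0 ≤ cr (∑ j ∈ Finset.Ico j (n + 1), p j) (z * ∑ j ∈ Finset.Ico i j, p j) := by
      rw [Finset.mul_sum]
      apply cr_sum_sum_nonneg
      intro a ha b hb
      simp only [Finset.mem_Ico] at ha hb
      exact i6 b a (by omega) (by omega)
    linarith

lemma st_inv {z : ℂ} (hz : 0 < z.im) (n : ℕ) : Inv z n (st z n).1 (st z n).2 := by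
  induction n with
  | zero =>
    refine ⟨?_, ?_, ?_, ?_, ?_, ?_⟩ <;> intros <;> simp [st, cr, hz.le]
  | succ n ih => exact ih.step hz

lemma comb_aux {z : ℂ} (hz : 0 < z.im) (n : ℕ) (h : ℕ → ℝ) (h0 : 0 < h 0) (hn : ∀ k, 0 ≤ h k)
    (hp : pp z n 0 ≠ 0) : ∑ k ∈ Finset.range (n + 1), (h k : ℂ) * pp z n k ≠ 0 := by
  intro hs
  have key : 0 < cr (∑ k ∈ Finset.range (n + 1), (h k : ℂ) * pp z n k) (z * pp z n 0) := by
    rw [cr_sum_left]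
    have hsc : ∀ k, cr ((h k : ℂ) * pp z n k) (z * pp z n 0)
        = h k * cr (pp z n k) (z * pp z n 0) := by
      intro k; simp [cr]; ring
    refine Finset.sum_pos' ?_ ⟨0, by simp, ?_⟩
    · intro k hk
      rw [hsc]
      exact mul_nonneg (hn k) ((st_inv hz n).i6 0 k (by omega) (by simp at hk; omega))
    · rw [hsc, cr_self_mul]
      have : 0 < (pp z n 0).re ^ 2 + (pp z n 0).im ^ 2 := by
        have := Complex.normSq_pos.2 hp
        rw [Complex.normSq_apply] at this
        nlinarith
      positivity
  rw [hs, cr_zero_left] at key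
  exact lt_irrefl _ key

lemma pp_succ_zero (z : ℂ) (n : ℕ) : pp z (n + 1) 0 = ∑ k ∈ Finset.range (n + 1), pp z n k := by
  simp only [pp, st, Finset.range_eq_Ico, Finset.Ico_self, Finset.sum_empty, mul_zero, add_zero]

lemma pp_zero_ne {z : ℂ} (hz : 0 < z.im) (n : ℕ) : pp z n 0 ≠ 0 := by
  induction n with
  | zero => simp [pp, st]
  | succ n ih =>
    rw [pp_succ_zero]
    simpa using comb_aux hz n (fun _ => 1) one_pos (fun _ => zero_le_one) ih

lemma comb_ne {z : ℂ} (hz : 0 < z.im) (n : ℕ) (h : ℕ → ℝ) (h0 : 0 < h 0) (hn : ∀ k, 0 ≤ h k) :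
    ∑ k ∈ Finset.range (n + 1), (h k : ℂ) * pp z n k ≠ 0 :=
  comb_aux hz n h h0 hn (pp_zero_ne hz n)

open ComplexOrder in
lemma st_nonneg {z : ℂ} (hz : 0 ≤ z) (n : ℕ) : (∀ k, 0 ≤ (st z n).1 k) ∧ (∀ k, 0 ≤ (st z n).2 k) := by
  induction n with
  | zero => simp [st]
  | succ n ih =>
    refine ⟨fun k => Finset.sum_nonneg fun j _ => add_nonneg (ih.1 j) (mul_nonneg hz (ih.2 j)),
      fun k => Finset.sum_nonneg fun j _ => ih.1 j⟩

open ComplexOrder in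
lemma pp_nonneg {z : ℂ} (hz : 0 ≤ z) (n k : ℕ) : 0 ≤ pp z n k :=
  add_nonneg ((st_nonneg hz n).1 k) (mul_nonneg hz ((st_nonneg hz n).2 k))

open ComplexOrder in
lemma pp_zero_pos {z : ℂ} (hz : 0 ≤ z) (n : ℕ) : 0 < pp z n 0 := by
  induction n with
  | zero => simp [pp, st]
  | succ n ih =>
    rw [pp_succ_zero]
    exact Finset.sum_pos' (fun k _ => pp_nonneg hz n k) ⟨0, by simp, ih⟩

open ComplexOrder in
lemma comb_ne_pos {z : ℂ} (hz : 0 ≤ z) (n : ℕ) (h : ℕ → ℝ) (h0 : 0 < h 0) (hn : ∀ k, 0 ≤ h k) :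
    ∑ k ∈ Finset.range (n + 1), (h k : ℂ) * pp z n k ≠ 0 := by
  apply ne_of_gt
  refine Finset.sum_pos' (fun k _ => mul_nonneg (by exact_mod_cast hn k) (pp_nonneg hz n k))
    ⟨0, by simp, mul_pos (by exact_mod_cast h0) (pp_zero_pos hz n)⟩

/-- the generating function of isolated flag h-numbers as a functional of the f-polynomial -/
noncomputable def GG (y : ℂ) : ℕ → ℂ[X] → ℂ
  | 0, f => f.coeff 0
  | 1, f => f.coeff 0 + y * (f.coeff 1 - f.coeff 0)
  | n + 2, f => GG y (n + 1) f + y * GG y n (C (f.coeff (n + 2)) * (1 + X) ^ (n + 2) - f)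

lemma GG_add (y : ℂ) (n : ℕ) : ∀ f g : ℂ[X], GG y n (f + g) = GG y n f + GG y n g := by
  induction n using Nat.twoStepInduction with
  | zero => intro f g; simp [GG]
  | one => intro f g; simp [GG]; ring
  | more n h0 h1 =>
    intro f g
    rw [GG, GG, GG, h1]
    have : C ((f + g).coeff (n + 2)) * (1 + X) ^ (n + 2) - (f + g)
        = (C (f.coeff (n + 2)) * (1 + X) ^ (n + 2) - f)
          + (C (g.coeff (n + 2)) * (1 + X) ^ (n + 2) - g) := by
      rw [coeff_add, C_add]; ring
    rw [this, h0]; ring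

lemma GG_smul (y c : ℂ) (n : ℕ) : ∀ f : ℂ[X], GG y n (C c * f) = c * GG y n f := by
  induction n using Nat.twoStepInduction with
  | zero => intro f; simp [GG]
  | one => intro f; simp [GG]; ring
  | more n h0 h1 =>
    intro f
    rw [GG, GG, h1]
    have : C ((C c * f).coeff (n + 2)) * (1 + X) ^ (n + 2) - C c * f
        = C c * (C (f.coeff (n + 2)) * (1 + X) ^ (n + 2) - f) := by
      rw [coeff_C_mul, C_mul]; ring
    rw [this, h0]; ring

lemma GG_zero (y : ℂ) (n : ℕ) : GG y n 0 = 0 := by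
  have := GG_smul y 0 n 0
  simpa using this

lemma GG_sum (y : ℂ) (n : ℕ) {ι : Type*} (s : Finset ι) (f : ι → ℂ[X]) :
    GG y n (∑ i ∈ s, f i) = ∑ i ∈ s, GG y n (f i) := by
  classical
  induction s using Finset.induction_on with
  | empty => simp [GG_zero]
  | insert a s ha ih => rw [Finset.sum_insert ha, Finset.sum_insert ha, GG_add, ih]

lemma GG_high (y : ℂ) (n : ℕ) : ∀ f : ℂ[X], (∀ i ≤ n, f.coeff i = 0) → GG y n f = 0 := by
  induction n using Nat.twoStepInduction with
  | zero => intro f h; simpa [GG] using h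
  | one => intro f h; simp [GG, h 0, h 1]
  | more n h0 h1 =>
    intro f h
    rw [GG, h1 f (fun i hi => h i (by omega)), h (n + 2) le_rfl, h0]
    · simp
    · intro i hi
      simp [h i (by omega)]

/-- basis polynomials -/
noncomputable def FF (n k : ℕ) : ℂ[X] := X ^ k * (1 + X) ^ (n - k)

lemma FF_succ (n k : ℕ) (hk : k ≤ n) : FF (n + 1) k = FF n k + FF (n + 1) (k + 1) := by
  unfold FF
  obtain ⟨d, rfl⟩ := Nat.exists_eq_add_of_le hk
  rw [show k + d + 1 - k = d + 1 by omega, show k + d - k = d by omega,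
    show k + d + 1 - (k + 1) = d by omega]
  ring

lemma FF_up (n k l : ℕ) (hkl : k ≤ l) (hl : l ≤ n + 1) :
    FF (n + 1) k = ∑ j ∈ Finset.Ico k l, FF n j + FF (n + 1) l := by
  induction l, hkl using Nat.le_induction with
  | base => simp
  | succ l hkl ih =>
    rw [ih (by omega), Finset.sum_Ico_succ_top hkl, FF_succ n l (by omega)]; ring

lemma FF_coeff_top (n k : ℕ) (hk : k ≤ n) : (FF n k).coeff n = 1 := by
  unfold FF
  rw [coeff_X_pow_mul', if_pos hk, coeff_one_add_X_pow]
  simp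

lemma GG_FF_up (y : ℂ) (n k : ℕ) (hk : k ≤ n + 1) :
    GG y n (FF (n + 1) k) = ∑ j ∈ Finset.Ico k (n + 1), GG y n (FF n j) := by
  rw [FF_up n k (n + 1) hk le_rfl, GG_add, GG_sum, GG_high y n (FF (n + 1) (n + 1)), add_zero]
  intro i hi
  unfold FF
  rw [coeff_X_pow_mul', if_neg (by omega)]

lemma FF_down (n k : ℕ) (hk : k ≤ n + 1) :
    (1 + X) ^ (n + 1) - FF (n + 1) k = ∑ j ∈ Finset.Ico 0 k, FF n j := by
  have := FF_up n 0 k (Nat.zero_le _) hk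
  have h0 : FF (n + 1) 0 = (1 + X) ^ (n + 1) := by simp [FF]
  rw [← h0, this]; ring

lemma GG_FF (y : ℂ) (n : ℕ) : ∀ k ≤ n, GG y n (FF n k) = pp y n k := by
  induction n using Nat.twoStepInduction with
  | zero =>
    intro k hk
    obtain rfl : k = 0 := by omega
    simp [GG, FF, pp, st]
  | one =>
    intro k hk
    interval_cases k
    · simp [GG, FF, pp, st, coeff_one]
    · simp [GG, FF, pp, st]
  | more n h0 h1 =>
    intro k hk
    rw [GG, FF_coeff_top _ _ hk, C_1, one_mul, FF_down (n + 1) k hk, GG_FF_up y (n + 1) k hk,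
      GG_sum, pp]
    have e1 : ∑ j ∈ Finset.Ico k (n + 1 + 1), GG y (n + 1) (FF (n + 1) j) = (st y (n + 2)).1 k := by
      rw [st]
      refine Finset.sum_congr rfl fun j hj => ?_
      rw [Finset.mem_Ico] at hj
      rw [h1 j (by omega), pp]
    have e2 : ∑ j ∈ Finset.Ico 0 k, GG y n (FF (n + 1) j) = (st y (n + 2)).2 k := by
      rw [st]
      refine Finset.sum_congr rfl fun j hj => ?_
      rw [Finset.mem_Ico] at hj
      rw [GG_FF_up y n j (by omega), st]
      refine Finset.sum_congr rfl fun i hi => ?_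
      rw [Finset.mem_Ico] at hi
      rw [h0 i (by omega), pp]
    rw [e1, e2]

/-- f-polynomial from h-polynomial -/
lemma f_of_h (n : ℕ) (f h : ℕ → ℂ)
    (hh : ∑ i ∈ Finset.range (n + 1), C (f i) * X ^ i * (1 - X) ^ (n - i)
      = ∑ k ∈ Finset.range (n + 1), C (h k) * X ^ k) :
    ∑ i ∈ Finset.range (n + 1), C (f i) * X ^ i
      = ∑ k ∈ Finset.range (n + 1), C (h k) * FF n k := by
  apply Polynomial.eq_of_infinite_eval_eq
  apply Set.Infinite.mono (s := {x : ℂ | 1 + x ≠ 0})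
  · intro x hx
    have hx' : (1 + x) ≠ 0 := hx
    have := congrArg (fun p => (1 + x) ^ n * p.eval (x / (1 + x))) hh
    simp only [eval_finsetSum, eval_mul, eval_C, eval_pow, eval_X, eval_sub, eval_one,
      Finset.mul_sum] at this
    simp only [Set.mem_ofPred_eq, FF, eval_finsetSum, eval_mul, eval_C, eval_pow, eval_X, eval_add,
      eval_one]
    convert this using 1
    · refine Finset.sum_congr rfl fun i hi => ?_
      obtain ⟨d, rfl⟩ := Nat.exists_eq_add_of_le (Nat.lt_succ_iff.1 (Finset.mem_range.1 hi))
      have h1 : 1 - x / (1 + x) = 1 / (1 + x) := by field_simp; ring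
      rw [h1, Nat.add_sub_cancel_left, div_pow, div_pow, pow_add, one_pow]
      field_simp
    · refine Finset.sum_congr rfl fun i hi => ?_
      obtain ⟨d, rfl⟩ := Nat.exists_eq_add_of_le (Nat.lt_succ_iff.1 (Finset.mem_range.1 hi))
      rw [Nat.add_sub_cancel_left, div_pow, pow_add]
      field_simp
  · have : {x : ℂ | 1 + x ≠ 0} = ({-1} : Set ℂ)ᶜ := by
      ext x
      simp only [Set.mem_ofPred_eq, Set.mem_compl_iff, Set.mem_singleton_iff, ne_eq, not_iff_not]
      constructor
      · intro h; linear_combination h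
      · rintro rfl; ring
    rw [this]
    exact (Set.finite_singleton _).infinite_compl

/-- the root transfer -/
lemma real_of_u {x : ℂ} (h1 : 1 + x ≠ 0) (hu : (x / (1 + x) ^ 2).im = 0)
    (hneg : (x / (1 + x) ^ 2).re ≤ 0) : x.im = 0 := by
  set u := x / (1 + x) ^ 2 with hud
  have hx : x = u * (1 + x) ^ 2 := by rw [hud]; field_simp
  have hur : u = (u.re : ℂ) := by apply Complex.ext <;> simp [hu]
  rw [hur] at hx
  generalize u.re = r at hx hneg
  have hre := congrArg Complex.re hx
  have him := congrArg Complex.im hx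
  simp [pow_two] at hre him
  by_contra hne
  -- b = r * 2 (1+a) b  hence  2 r (1 + a) = 1
  have h2 : r * (2 * (1 + x.re)) = 1 := by
    apply mul_right_cancel₀ hne
    linear_combination -him
  have h3 : x.re ^ 2 + x.im ^ 2 = 1 := by
    have hr : r ≠ 0 := by rintro rfl; simp at h2
    apply mul_left_cancel₀ hr
    linear_combination hre + x.re * h2
  nlinarith [sq_nonneg x.im, sq_nonneg x.re, sq_nonneg (1 + x.re)]

section PosetPart

variable {P : Type*} [Fintype P] [PartialOrder P] [OrderBot P]

/-- every lower interval is boolean, with compatible rank -/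
def Good (rk : P → ℕ) : Prop :=
  ∀ m : P, ∃ g : Finset (Fin (rk m)) ↪o P, (∀ x, x ∈ Set.range g ↔ x ≤ m) ∧
    ∀ S, rk (g S) = S.card

lemma mapEmb_range {n : ℕ} (T S : Finset (Fin n)) :
    S ∈ Set.range (Finset.mapEmbedding (T.orderEmbOfFin rfl).toEmbedding) ↔ S ⊆ T := by
  constructor
  · rintro ⟨U, rfl⟩
    intro x hx
    rw [Finset.mapEmbedding_apply, Finset.mem_map] at hx
    obtain ⟨a, _, rfl⟩ := hx
    exact Finset.orderEmbOfFin_mem T rfl a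
  · intro h
    refine ⟨Finset.univ.filter (fun a => T.orderEmbOfFin rfl a ∈ S), ?_⟩
    rw [Finset.mapEmbedding_apply]
    ext x
    simp only [Finset.mem_map, Finset.mem_filter, Finset.mem_univ, true_and]
    constructor
    · rintro ⟨a, ha, rfl⟩; exact ha
    · intro hx
      have : x ∈ Set.range (T.orderEmbOfFin rfl) := by
        rw [Finset.range_orderEmbOfFin]; exact h hx
      obtain ⟨a, rfl⟩ := this
      exact ⟨a, hx, rfl⟩

lemma good_bool (t : ℕ) : Good (Finset.card : Finset (Fin t) → ℕ) := by
  intro T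
  refine ⟨Finset.mapEmbedding (T.orderEmbOfFin rfl).toEmbedding, mapEmb_range T, ?_⟩
  intro S
  simp

lemma good_of_simplicial {n : ℕ} {rk : P → ℕ} (hrk : IsRankFunction rk)
    (hsimp : SimplicialOfRank P n) : Good rk := by
  intro m
  obtain ⟨M, hmM, hM⟩ := Finite.exists_le_maximal (p := fun _ : P => True) (a := m) trivial
  have hM' : IsMax M := fun b hb => hM.2 trivial hb
  obtain ⟨e⟩ := hsimp M hM'
  let gM : Finset (Fin n) ↪o P := e.symm.toOrderEmbedding.trans (OrderEmbedding.subtype _)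
  have hgM : ∀ S, gM S = (e.symm S : P) := fun S => rfl
  set T := e ⟨m, bot_le, hmM⟩ with hT
  have hmT : gM T = m := by rw [hgM, hT, OrderIso.symm_apply_apply]
  let g : Finset (Fin T.card) ↪o P :=
    (Finset.mapEmbedding (T.orderEmbOfFin rfl).toEmbedding).trans gM
  have hg : ∀ x, x ∈ Set.range g ↔ x ≤ m := by
    intro x
    constructor
    · rintro ⟨S, rfl⟩
      have h1 : Finset.mapEmbedding (T.orderEmbOfFin rfl).toEmbedding S ⊆ T :=
        (mapEmb_range T _).1 ⟨S, rfl⟩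
      rw [← hmT]
      exact gM.monotone h1
    · intro hx
      have hx2 : gM (e ⟨x, bot_le, hx.trans hmM⟩) = x := by
        rw [hgM, OrderIso.symm_apply_apply]
      have h1 : e ⟨x, bot_le, hx.trans hmM⟩ ⊆ T := by
        apply gM.le_iff_le.1
        rw [hx2, hmT]; exact hx
      obtain ⟨S, hS⟩ := (mapEmb_range T _).2 h1
      refine ⟨S, ?_⟩
      change gM (Finset.mapEmbedding (T.orderEmbOfFin rfl).toEmbedding S) = x
      rw [hS, hx2]
  have hconn : (Set.range g).OrdConnected := by
    have : Set.range g = Set.Iic m := by ext x; exact hg x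
    rw [this]; exact Set.ordConnected_Iic
  have hbot : g ∅ = ⊥ := by
    obtain ⟨S, hS⟩ := (hg ⊥).2 bot_le
    apply le_bot_iff.1
    rw [← hS]
    exact g.monotone (Finset.empty_subset S)
  have hcard : ∀ S, rk (g S) = S.card := by
    intro S
    induction S using Finset.induction_on with
    | empty => rw [hbot, hrk.1]; rfl
    | insert a S ha ih =>
      have hc : S ⋖ insert a S := Finset.covBy_insert ha
      rw [hrk.2 _ _ (hc.image g hconn), ih, Finset.card_insert_of_notMem ha]
  have hm : rk m = T.card := by
    obtain ⟨S, hS⟩ := (hg m).2 le_rfl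
    have : S = Finset.univ := by
      apply Finset.eq_univ_of_forall
      intro x
      have h1 : g {x} ≤ g S := by rw [hS]; exact (hg _).1 ⟨_, rfl⟩
      have h2 := g.le_iff_le.1 h1
      exact h2 (Finset.mem_singleton_self x)
    rw [← hS, hcard, this]; simp
  rw [hm]
  exact ⟨g, hg, hcard⟩

lemma Good.bot {rk : P → ℕ} (h : Good rk) : rk ⊥ = 0 := by
  obtain ⟨g, h1, h2⟩ := h ⊥
  have : g ∅ = ⊥ := le_bot_iff.1 ((h1 _).1 ⟨_, rfl⟩)
  rw [← this, h2]; rfl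

lemma Good.strictMono {rk : P → ℕ} (h : Good rk) : StrictMono rk := by
  intro x y hxy
  obtain ⟨g, h1, h2⟩ := h y
  obtain ⟨S, rfl⟩ := (h1 x).2 hxy.le
  obtain ⟨U, hU⟩ := (h1 y).2 le_rfl
  have : S < U := by apply g.lt_iff_lt.1; rw [hU]; exact hxy
  have h3 := h2 U
  rw [hU] at h3
  rw [h2]
  exact (Finset.card_lt_card this).trans_le h3.ge

lemma Good.fvec_zero {rk : P → ℕ} (h : Good rk) : fvec rk 0 = 1 := by
  classical
  unfold fvec
  rw [Finset.card_eq_one]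
  refine ⟨⊥, ?_⟩
  ext x
  simp only [Finset.mem_filter, Finset.mem_univ, true_and, Finset.mem_singleton]
  constructor
  · intro hx
    by_contra hne
    have := h.strictMono (bot_lt_iff_ne_bot.2 hne)
    omega
  · rintro rfl; exact h.bot

lemma flagF_empty (rk : P → ℕ) : flagF rk ∅ = 1 := by
  unfold flagF
  rw [Nat.card_eq_one_iff_unique]
  refine ⟨⟨?_⟩, ⟨⟨∅, by simp⟩⟩⟩
  rintro ⟨a, _, _, ha⟩ ⟨b, _, _, hb⟩
  rw [Finset.image_eq_empty] at ha hb
  subst ha; subst hb; rfl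

/-- boolean flag numbers -/
noncomputable def BB (t : ℕ) (T : Finset ℕ) : ℕ := flagF (Finset.card : Finset (Fin t) → ℕ) T

lemma Good.flagF_eq {rk : P → ℕ} (h : Good rk) {T : Finset ℕ} {t : ℕ} (ht : t ∈ T)
    (ht1 : 1 ≤ t) (hmax : ∀ i ∈ T, i ≤ t) : flagF rk T = fvec rk t * BB t (T.erase t) := by
  classical
  have hex : ∀ m : {m : P // rk m = t}, ∃ g : Finset (Fin t) ↪o P,
      (∀ x, x ∈ Set.range g ↔ x ≤ m.1) ∧ ∀ S, rk (g S) = S.card := by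
    rintro ⟨m, rfl⟩; exact h m
  choose g hg hc using hex
  have hgbot : ∀ m, g m ⊥ = ⊥ := by
    intro m
    obtain ⟨S, hS⟩ := (hg m ⊥).2 bot_le
    exact le_bot_iff.1 (hS ▸ (g m).monotone bot_le)
  have hfv : fvec rk t = Nat.card {m : P // rk m = t} := by
    rw [Nat.card_eq_fintype_card, Fintype.card_subtype]; rfl
  rw [hfv, BB, flagF, flagF, ← Nat.card_prod]
  symm
  let Φ : {m : P // rk m = t} × {c : Finset (Finset (Fin t)) // IsChain (· ≤ ·) (c : Set (Finset (Fin t)))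
        ∧ (⊥ : Finset (Fin t)) ∉ c ∧ c.image Finset.card = T.erase t} →
      {c : Finset P // IsChain (· ≤ ·) (c : Set P) ∧ (⊥ : P) ∉ c ∧ c.image rk = T} :=
    fun q => ⟨insert q.1.1 (q.2.1.map (g q.1).toEmbedding), by
      obtain ⟨⟨m, hm⟩, ⟨c, hc1, hc2, hc3⟩⟩ := q
      refine ⟨?_, ?_, ?_⟩
      · simp only [Finset.coe_insert, Finset.coe_map]
        apply IsChain.insert
        · rintro _ ⟨a, ha, rfl⟩ _ ⟨b, hb, rfl⟩ hab
          rcases hc1.total ha hb with h1 | h1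
          · exact Or.inl ((g ⟨m, hm⟩).monotone h1)
          · exact Or.inr ((g ⟨m, hm⟩).monotone h1)
        · rintro _ ⟨a, ha, rfl⟩ _
          exact Or.inr ((hg ⟨m, hm⟩ _).1 ⟨a, rfl⟩)
      · rw [Finset.mem_insert, Finset.mem_map]
        rintro (h1 | ⟨a, ha, h1⟩)
        · simp only at h1
          rw [← h1, h.bot] at hm; omega
        · have h2 : g ⟨m, hm⟩ a = g ⟨m, hm⟩ ⊥ := by rw [hgbot]; exact h1
          have h3 := (g ⟨m, hm⟩).injective h2
          subst h3; exact hc2 ha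
      · rw [Finset.image_insert, Finset.map_eq_image, Finset.image_image]
        have : c.image (rk ∘ (g ⟨m, hm⟩).toEmbedding) = c.image Finset.card := by
          apply Finset.image_congr
          intro S _
          exact hc ⟨m, hm⟩ S
        refine (congrArg (insert (rk m)) (this.trans hc3)).trans ?_
        rw [hm]
        exact Finset.insert_erase ht⟩
  have hrkne : ∀ (m : {m : P // rk m = t}) (c : Finset (Finset (Fin t))),
      c.image Finset.card = T.erase t → ∀ x ∈ c.map (g m).toEmbedding, rk x ≠ t := by
    intro m c hcc x hx
    obtain ⟨S, hS, rfl⟩ := Finset.mem_map.1 hx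
    have : S.card ∈ T.erase t := hcc ▸ Finset.mem_image_of_mem _ hS
    change rk (g m S) ≠ t
    rw [hc]; exact (Finset.mem_erase.1 this).1
  refine Nat.card_eq_of_bijective Φ ⟨?_, ?_⟩
  · rintro ⟨m, c, hc1, hc2, hc3⟩ ⟨m', c', hc1', hc2', hc3'⟩ heq
    have heq' : insert m.1 (c.map (g m).toEmbedding) = insert m'.1 (c'.map (g m').toEmbedding) :=
      congrArg Subtype.val heq
    have hmm : m = m' := by
      have : m.1 ∈ insert m'.1 (c'.map (g m').toEmbedding) := heq' ▸ Finset.mem_insert_self _ _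
      rcases Finset.mem_insert.1 this with h1 | h1
      · exact Subtype.ext h1
      · exact absurd m.2 (hrkne m' c' hc3' _ h1)
    subst hmm
    have h1 : m.1 ∉ c.map (g m).toEmbedding := fun hx => hrkne m c hc3 _ hx m.2
    have h2 : m.1 ∉ c'.map (g m).toEmbedding := fun hx => hrkne m c' hc3' _ hx m.2
    have h3 : c.map (g m).toEmbedding = c'.map (g m).toEmbedding := by
      rw [← Finset.erase_insert h1, heq', Finset.erase_insert h2]
    have h4 := Finset.map_injective _ h3
    subst h4; rfl
  · rintro ⟨c, hc1, hc2, hc3⟩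
    have htc : t ∈ c.image rk := hc3 ▸ ht
    obtain ⟨m, hmc, hm⟩ := Finset.mem_image.1 htc
    let c' : Finset (Finset (Fin t)) := Finset.univ.filter (fun S => g ⟨m, hm⟩ S ∈ c.erase m)
    have hmap : c'.map (g ⟨m, hm⟩).toEmbedding = c.erase m := by
      ext x
      rw [Finset.mem_map]
      constructor
      · rintro ⟨S, hS, rfl⟩
        exact (Finset.mem_filter.1 hS).2
      · intro hx
        have hxc := Finset.mem_erase.1 hx
        have hxm : x ≤ m := by
          rcases hc1.total hxc.2 hmc with h1 | h1
          · exact h1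
          · have h2 := h.strictMono (lt_of_le_of_ne h1 (Ne.symm hxc.1))
            have h3 := hmax (rk x) (hc3 ▸ Finset.mem_image_of_mem rk hxc.2)
            omega
        obtain ⟨S, rfl⟩ := (hg ⟨m, hm⟩ x).2 hxm
        exact ⟨S, Finset.mem_filter.2 ⟨Finset.mem_univ _, hx⟩, rfl⟩
    refine ⟨⟨⟨m, hm⟩, ⟨c', ?_, ?_, ?_⟩⟩, ?_⟩
    · intro a ha b hb _
      have ha' := Finset.mem_of_mem_erase (Finset.mem_filter.1 ha).2
      have hb' := Finset.mem_of_mem_erase (Finset.mem_filter.1 hb).2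
      rcases hc1.total ha' hb' with h1 | h1
      · exact Or.inl ((g ⟨m, hm⟩).le_iff_le.1 h1)
      · exact Or.inr ((g ⟨m, hm⟩).le_iff_le.1 h1)
    · intro hb
      have hb' := Finset.mem_of_mem_erase (Finset.mem_filter.1 hb).2
      rw [hgbot] at hb'
      exact hc2 hb'
    · have h1 : c'.image Finset.card = (c.erase m).image rk := by
        rw [← hmap, Finset.map_eq_image, Finset.image_image]
        apply Finset.image_congr
        intro S _
        exact (hc ⟨m, hm⟩ S).symm
      rw [h1, ← hc3]
      ext i
      simp only [Finset.mem_image, Finset.mem_erase]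
      constructor
      · rintro ⟨x, ⟨hxm, hxc⟩, rfl⟩
        refine ⟨?_, x, hxc, rfl⟩
        intro hxt
        rcases hc1.total hxc hmc with h1 | h1
        · have := h.strictMono (lt_of_le_of_ne h1 hxm); omega
        · have := h.strictMono (lt_of_le_of_ne h1 (Ne.symm hxm)); omega
      · rintro ⟨hi, x, hxc, rfl⟩
        exact ⟨x, ⟨fun hxm => hi (hxm ▸ hm), hxc⟩, rfl⟩
    · apply Subtype.ext
      change insert m (c'.map (g ⟨m, hm⟩).toEmbedding) = c
      rw [hmap, Finset.insert_erase hmc]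

/-- abstract flag f-numbers -/
noncomputable def al (f : ℂ[X]) (T : Finset ℕ) : ℂ :=
  if h : T.Nonempty then f.coeff (T.max' h) * (BB (T.max' h) (T.erase (T.max' h)) : ℂ)
  else f.coeff 0

lemma al_empty (f : ℂ[X]) : al f ∅ = f.coeff 0 := by simp [al]

lemma al_insert (f : ℂ[X]) (n : ℕ) (T : Finset ℕ) (hT : T ⊆ Finset.Icc 1 n) :
    al f (insert (n + 1) T) = f.coeff (n + 1) * (BB (n + 1) T : ℂ) := by
  have hne : (insert (n + 1) T).Nonempty := Finset.insert_nonempty _ _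
  have hmx : (insert (n + 1) T).max' hne = n + 1 := by
    apply le_antisymm
    · apply Finset.max'_le
      intro y hy
      rcases Finset.mem_insert.1 hy with rfl | hy
      · exact le_rfl
      · have := Finset.mem_Icc.1 (hT hy); omega
    · exact Finset.le_max' _ _ (Finset.mem_insert_self _ _)
  have hn : n + 1 ∉ T := fun hh => by have := Finset.mem_Icc.1 (hT hh); omega
  rw [al, dif_pos hne, hmx, Finset.erase_insert hn]

lemma Good.al_eq {rk : P → ℕ} (h : Good rk) {n : ℕ} {T : Finset ℕ} (hT : T ⊆ Finset.Icc 1 n)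
    {f : ℂ[X]} (hf : ∀ i ≤ n, f.coeff i = (fvec rk i : ℂ)) : al f T = (flagF rk T : ℂ) := by
  by_cases hne : T.Nonempty
  · have hmem := Finset.max'_mem T hne
    have hI := Finset.mem_Icc.1 (hT hmem)
    rw [al, dif_pos hne, hf _ hI.2,
      h.flagF_eq hmem hI.1 (fun i hi => Finset.le_max' T i hi), Nat.cast_mul]
  · rw [Finset.not_nonempty_iff_eq_empty] at hne
    subst hne
    rw [al_empty, hf 0 (Nat.zero_le _), h.fvec_zero, flagF_empty]

lemma BB_eq (t : ℕ) (T : Finset ℕ) (hT : T ⊆ Finset.Icc 1 t) :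
    (BB t T : ℂ) = al ((1 + X) ^ t) T := by
  rw [BB, ← (good_bool t).al_eq hT]
  intro i _
  rw [coeff_one_add_X_pow]
  congr 1
  unfold fvec
  have : (Finset.univ.filter (fun x : Finset (Fin t) => x.card = i))
      = Finset.powersetCard i Finset.univ := by
    ext x; simp [Finset.mem_powersetCard]
  rw [this, Finset.card_powersetCard, Finset.card_univ, Fintype.card_fin]

lemma al_lin (c : ℂ) (f g : ℂ[X]) (T : Finset ℕ) : al (C c * f - g) T = c * al f T - al g T := by
  unfold al
  split_ifs
  · simp; ring
  · simp

/-- abstract flag h-numbers -/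
noncomputable def bet (f : ℂ[X]) (S : Finset ℕ) : ℂ :=
  ∑ T ∈ S.powerset, (-1) ^ ((S \ T).card) * al f T

lemma bet_empty (f : ℂ[X]) : bet f ∅ = f.coeff 0 := by simp [bet, al_empty]

lemma bet_insert (f : ℂ[X]) (n : ℕ) (S : Finset ℕ) (hS : S ⊆ Finset.Icc 1 n) :
    bet f (insert (n + 1) S) = bet (C (f.coeff (n + 1)) * (1 + X) ^ (n + 1) - f) S := by
  have hn : n + 1 ∉ S := fun hh => by have := Finset.mem_Icc.1 (hS hh); omega
  unfold bet
  rw [Finset.sum_powerset_insert hn, ← Finset.sum_add_distrib]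
  refine Finset.sum_congr rfl fun T hT => ?_
  rw [Finset.mem_powerset] at hT
  have hnT : n + 1 ∉ T := fun hh => hn (hT hh)
  have e1 : insert (n + 1) S \ T = insert (n + 1) (S \ T) := Finset.insert_sdiff_of_notMem _ hnT
  have e2 : insert (n + 1) S \ insert (n + 1) T = S \ T := by
    ext x
    simp only [Finset.mem_sdiff, Finset.mem_insert, not_or]
    constructor
    · rintro ⟨h1 | h1, h2, h3⟩
      · exact absurd h1 h2
      · exact ⟨h1, h3⟩
    · rintro ⟨h1, h2⟩
      exact ⟨Or.inr h1, fun hh => hn (hh ▸ h1), h2⟩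
  rw [e1, e2, Finset.card_insert_of_notMem (by simp [hn]), al_insert f n T (hT.trans hS),
    BB_eq (n + 1) T ((hT.trans hS).trans (Finset.Icc_subset_Icc_right (by omega))), al_lin]
  ring

lemma iso_split (n : ℕ) : (Finset.Icc 1 (n + 2)).powerset.filter IsolatedSet
    = (Finset.Icc 1 (n + 1)).powerset.filter IsolatedSet
      ∪ ((Finset.Icc 1 n).powerset.filter IsolatedSet).image (insert (n + 2)) := by
  ext S
  simp only [Finset.mem_union, Finset.mem_filter, Finset.mem_powerset, Finset.mem_image]
  constructor
  · rintro ⟨hS, hI⟩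
    by_cases hn : n + 2 ∈ S
    · right
      refine ⟨S.erase (n + 2), ⟨?_, ?_⟩, Finset.insert_erase hn⟩
      · intro x hx
        obtain ⟨h1, h2⟩ := Finset.mem_erase.1 hx
        have h3 := Finset.mem_Icc.1 (hS h2)
        have h4 : x ≠ n + 1 := by rintro rfl; exact hI _ h2 hn
        rw [Finset.mem_Icc]; omega
      · intro i hi hi2
        exact hI i (Finset.mem_of_mem_erase hi) (Finset.mem_of_mem_erase hi2)
    · left
      refine ⟨?_, hI⟩
      intro x hx
      have h3 := Finset.mem_Icc.1 (hS hx)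
      have h4 : x ≠ n + 2 := by rintro rfl; exact hn hx
      rw [Finset.mem_Icc]; omega
  · rintro (⟨hS, hI⟩ | ⟨S, ⟨hS, hI⟩, rfl⟩)
    · exact ⟨hS.trans (Finset.Icc_subset_Icc_right (by omega)), hI⟩
    · refine ⟨?_, ?_⟩
      · intro x hx
        rcases Finset.mem_insert.1 hx with rfl | hx
        · simp
        · have := Finset.mem_Icc.1 (hS hx)
          rw [Finset.mem_Icc]; omega
      · intro i hi hi2
        rcases Finset.mem_insert.1 hi with rfl | hi
        · rcases Finset.mem_insert.1 hi2 with h | h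
          · omega
          · have := Finset.mem_Icc.1 (hS h); omega
        · rcases Finset.mem_insert.1 hi2 with h | h
          · have := Finset.mem_Icc.1 (hS hi); omega
          · exact hI i hi h

lemma sum_bet (y : ℂ) (n : ℕ) : ∀ f : ℂ[X],
    ∑ S ∈ (Finset.Icc 1 n).powerset.filter IsolatedSet, bet f S * y ^ S.card = GG y n f := by
  induction n using Nat.twoStepInduction with
  | zero =>
    intro f
    have : (Finset.Icc 1 0).powerset.filter IsolatedSet = {∅} := by decide
    rw [this]; simp [bet_empty, GG]
  | one =>
    intro f
    have : (Finset.Icc 1 1).powerset.filter IsolatedSet = {∅, {1}} := by decide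
    rw [this, Finset.sum_pair (by decide)]
    have h := bet_insert f 0 ∅ (by simp)
    simp only [zero_add, insert_empty_eq] at h
    rw [h, bet_empty, bet_empty, GG]
    simp; ring
  | more n h0 h1 =>
    intro f
    have hnot : ∀ S ∈ (Finset.Icc 1 n).powerset.filter IsolatedSet, n + 2 ∉ S := by
      intro S hS hh
      have := Finset.mem_Icc.1 (Finset.mem_powerset.1 (Finset.mem_filter.1 hS).1 hh)
      omega
    rw [iso_split, Finset.sum_union, h1, Finset.sum_image, GG, ← h0, Finset.mul_sum]
    · congr 1
      refine Finset.sum_congr rfl fun S hS => ?_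
      have hS' := Finset.mem_powerset.1 (Finset.mem_filter.1 hS).1
      rw [bet_insert f (n + 1) S (hS'.trans (Finset.Icc_subset_Icc_right (by omega))),
        Finset.card_insert_of_notMem (hnot S hS)]
      ring
    · intro S hS S' hS' heq
      have h2 := hnot S hS
      have h3 := hnot S' hS'
      rw [← Finset.erase_insert h2, ← Finset.erase_insert h3]
      exact congrArg (fun U => Finset.erase U (n + 2)) heq
    · rw [Finset.disjoint_left]
      intro S hS hS'
      obtain ⟨U, _, rfl⟩ := Finset.mem_image.1 hS'
      have := Finset.mem_Icc.1 (Finset.mem_powerset.1 (Finset.mem_filter.1 hS).1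
        (Finset.mem_insert_self (n + 2) U))
      omega

lemma iso_card (n : ℕ) {S : Finset ℕ} (hS : S ∈ (Finset.Icc 1 n).powerset.filter IsolatedSet) :
    2 * S.card ≤ n + 1 := by
  obtain ⟨h1, h2⟩ := Finset.mem_filter.1 hS
  rw [Finset.mem_powerset] at h1
  have hd : Disjoint S (S.image (· + 1)) := by
    rw [Finset.disjoint_right]
    intro x hx hxS
    obtain ⟨i, hi, rfl⟩ := Finset.mem_image.1 hx
    exact h2 i hi hxS
  have hsub : S ∪ S.image (· + 1) ⊆ Finset.Icc 1 (n + 1) := by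
    intro x hx
    rcases Finset.mem_union.1 hx with hx | hx
    · have := Finset.mem_Icc.1 (h1 hx); rw [Finset.mem_Icc]; omega
    · obtain ⟨i, hi, rfl⟩ := Finset.mem_image.1 hx
      have := Finset.mem_Icc.1 (h1 hi); rw [Finset.mem_Icc]; omega
  have h3 := Finset.card_le_card hsub
  rw [Finset.card_union_of_disjoint hd, Finset.card_image_of_injective _ (add_left_injective 1),
    Nat.card_Icc] at h3
  omega

lemma flagH_eq {rk : P → ℕ} (h : Good rk) {n : ℕ} {S : Finset ℕ} (hS : S ⊆ Finset.Icc 1 n)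
    {f : ℂ[X]} (hf : ∀ i ≤ n, f.coeff i = (fvec rk i : ℂ)) : (flagH rk S : ℂ) = bet f S := by
  unfold flagH bet
  push_cast
  refine Finset.sum_congr rfl fun T hT => ?_
  rw [h.al_eq ((Finset.mem_powerset.1 hT).trans hS) hf]

lemma hPoly_natDegree (rk : P → ℕ) (n : ℕ) : (hPoly rk n).natDegree < n + 1 := by
  rw [Nat.lt_succ_iff]
  unfold hPoly
  refine natDegree_sum_le_of_forall_le _ _ fun i hi => ?_
  have hi' := Finset.mem_range.1 hi
  have h1 : (1 - X : ℤ[X]).natDegree ≤ 1 := by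
    refine (natDegree_sub_le _ _).trans ?_
    simp
  calc _ ≤ (C (fvec rk i : ℤ) * X ^ i).natDegree + ((1 - X : ℤ[X]) ^ (n - i)).natDegree :=
        natDegree_mul_le
    _ ≤ i + (n - i) * 1 := by
        apply add_le_add (natDegree_C_mul_X_pow_le _ _)
        exact natDegree_pow_le_of_le _ h1
    _ = n := by omega

/-- the key evaluation formula -/
lemma eval_formula {rk : P → ℕ} (h : Good rk) (n : ℕ) {x : ℂ} (hx : 1 + x ≠ 0) :
    aeval x (chowAugPoly rk n) = (1 + x) ^ (n + 1) *
      ∑ k ∈ Finset.range (n + 1), (((hvec rk n k : ℤ) : ℝ) : ℂ) * pp (x / (1 + x) ^ 2) n k := by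
  set y := x / (1 + x) ^ 2 with hy
  set f : ℂ[X] := ∑ i ∈ Finset.range (n + 1), C (fvec rk i : ℂ) * X ^ i with hfdef
  have hf : ∀ i ≤ n, f.coeff i = (fvec rk i : ℂ) := by
    intro i hi
    rw [hfdef, finsetSum_coeff]
    simp only [coeff_C_mul, coeff_X_pow, mul_ite, mul_one, mul_zero]
    rw [Finset.sum_ite_eq, if_pos (Finset.mem_range.2 (by omega))]
  have hff : f = ∑ k ∈ Finset.range (n + 1), C ((hvec rk n k : ℤ) : ℂ) * FF n k := by
    apply f_of_h
    have h1 := congrArg (Polynomial.map (Int.castRingHom ℂ))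
      ((hPoly rk n).as_sum_range' (n + 1) (hPoly_natDegree rk n))
    conv_lhs at h1 => rw [hPoly]
    simp only [Polynomial.map_sum, Polynomial.map_mul, Polynomial.map_pow, Polynomial.map_sub,
      Polynomial.map_one, map_X, map_C, Polynomial.map_monomial] at h1
    simp only [C_mul_X_pow_eq_monomial] at h1 ⊢
    simpa [hvec] using h1
  have e1 : ∑ k ∈ Finset.range (n + 1), (((hvec rk n k : ℤ) : ℝ) : ℂ) * pp y n k = GG y n f := by
    rw [hff, GG_sum]
    refine Finset.sum_congr rfl fun k hk => ?_
    rw [GG_smul, GG_FF y n k (by have := Finset.mem_range.1 hk; omega)]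
    simp
  rw [e1, ← sum_bet, chowAugPoly, map_sum, Finset.mul_sum]
  refine Finset.sum_congr rfl fun S hS => ?_
  have hc := iso_card n hS
  rw [← flagH_eq h (Finset.mem_powerset.1 (Finset.mem_filter.1 hS).1) hf]
  obtain ⟨d, hd⟩ := Nat.exists_eq_add_of_le hc
  rw [hd, Nat.add_sub_cancel_left, hy, div_pow, ← pow_mul, pow_add]
  simp only [map_smul, map_mul, map_pow, map_add, map_one, aeval_X]
  rw [Complex.real_smul]
  push_cast
  field_simp

end PosetPart

lemma main {P : Type*} [Fintype P] [PartialOrder P] [OrderBot P]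
    (n : ℕ) (rk : P → ℕ)
    (hrk : IsRankFunction rk)
    (hsimp : SimplicialOfRank P n)
    (hpos : ∀ k, 0 ≤ hvec rk n k) :
    RealRooted (chowAugPoly rk n) := by
  have hgood := good_of_simplicial hrk hsimp
  have h0 : hvec rk n 0 = 1 := by
    have hfv := hgood.fvec_zero
    rw [hvec, coeff_zero_eq_eval_zero, hPoly, eval_finsetSum, Finset.sum_range_succ']
    simp [hfv]
  intro x hx
  have hx0 : aeval x (chowAugPoly rk n) = 0 := by
    have := (mem_roots'.1 hx).2
    rwa [IsRoot.def, eval_map_algebraMap] at this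
  by_cases h1 : 1 + x = 0
  · have : x = -1 := by linear_combination h1
    simp [this]
  have hpos' : ∀ k, (0 : ℝ) ≤ ((hvec rk n k : ℤ) : ℝ) := fun k => by exact_mod_cast hpos k
  have h0' : (0 : ℝ) < ((hvec rk n 0 : ℤ) : ℝ) := by rw [h0]; simp
  have key : ∀ w : ℂ, 1 + w ≠ 0 → aeval w (chowAugPoly rk n) = 0 →
      ¬ 0 < (w / (1 + w) ^ 2).im := by
    intro w hw hw0 him
    rw [eval_formula hgood n hw] at hw0
    rcases mul_eq_zero.1 hw0 with h | h
    · exact hw (pow_eq_zero_iff (by omega) |>.1 h)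
    · exact comb_ne him n _ h0' hpos' h
  have him : (x / (1 + x) ^ 2).im = 0 := by
    apply le_antisymm (not_lt.1 (key x h1 hx0))
    have hc := key (starRingEnd ℂ x) ?_ ?_
    · have e : (starRingEnd ℂ x) / (1 + starRingEnd ℂ x) ^ 2 = starRingEnd ℂ (x / (1 + x) ^ 2) := by
        simp
      rw [e, Complex.conj_im] at hc
      linarith
    · intro h
      apply h1
      have := congrArg (starRingEnd ℂ) h
      simpa using this
    · rw [aeval_conj, hx0, map_zero]
  apply real_of_u h1 him
  by_contra hre
  have hre' := not_le.1 hre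
  rw [eval_formula hgood n h1] at hx0
  rcases mul_eq_zero.1 hx0 with h | h
  · exact h1 (pow_eq_zero_iff (by omega) |>.1 h)
  · refine comb_ne_pos ?_ n _ h0' hpos' h
    rw [Complex.le_def]
    exact ⟨hre'.le, him.symm⟩

end ChowAug

theorem statement1 {P : Type*} [Fintype P] [PartialOrder P] [OrderBot P]
    (n : ℕ) (rk : P → ℕ)
    (hrk : IsRankFunction rk)
    (hsimp : SimplicialOfRank P n)
    (hpos : ∀ k, 0 ≤ hvec rk n k) :
    RealRooted (chowAugPoly rk n) := by
  exact ChowAug.main n rk hrk hsimp hpos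
end
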